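/- arXiv:2602.03642 — 2 statements merged into one kernel-verified Lean document; each statement's English description precedes it below -/
import Mathlib

section
/- Let I be a nonzero ideal of ℤ[r] with gcd(N(I), Disc(f)) = 1 and ρ(I) = 1. Then for every integer m one has m ∈ I if and only if N(I) divides m. -/
open Polynomial

/-- The subring `ℤ[r]` of `K` generated by `r`. -/
noncomputable def Zr {K : Type*} [Field K] (r : K) : Subalgebra ℤ K := Algebra.adjoin ℤ {r}

/-- `r` as an element of `ℤ[r]`. -/
noncomputable def rZ {K : Type*} [Field K] (r : K) : Zr r := ⟨r, Algebra.subset_adjoin rfl⟩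

/-- The norm `N(I)` of an ideal `I` of `ℤ[r]`, i.e. the cardinality of `ℤ[r]/I`. -/
noncomputable def Nrm {K : Type*} [Field K] (r : K) (I : Ideal (Zr r)) : ℕ :=
  Nat.card ((Zr r) ⧸ I)

/-- `ρ(I) = #{n mod N(I) : I ∣ n − r}`. -/
noncomputable def rho {K : Type*} [Field K] (r : K) (I : Ideal (Zr r)) : ℕ :=
  Nat.card {k : ZMod (Nrm r I) // ∃ n : ℤ, (n : ZMod (Nrm r I)) = k ∧ (n : Zr r) - rZ r ∈ I}

/-- The discriminant of the cubic `X³ + c₂X² + c₁X + c₀`. -/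
def discF (c₀ c₁ c₂ : ℤ) : ℤ :=
  18 * c₂ * c₁ * c₀ - 4 * c₂ ^ 3 * c₀ + c₂ ^ 2 * c₁ ^ 2 - 4 * c₁ ^ 3 - 27 * c₀ ^ 2

/-!
Since `ρ(I) ≠ 0`, some integer `n` is congruent to `r` modulo `I`, so every element of `ℤ[r]` is
congruent to an integer. Hence the additive group of `ℤ[r]/I` is cyclic, generated by `1`, and the
order `N(I)` of this group is the additive order of `1`.
-/

theorem addOrderOf_one_eq_natCard_of_intCast_surjective {G : Type*} [AddGroupWithOne G]
    (h : Function.Surjective (Int.cast : ℤ → G)) : addOrderOf (1 : G) = Nat.card G :=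
  addOrderOf_eq_card_of_forall_mem_zmultiples fun y ↦
    (h y).imp fun k hk ↦ (zsmul_one k).trans hk

section Quotient

variable {A : Type*} [CommRing A] {I : Ideal A}

theorem algebraMap_quotient_surjective_of_sub_mem {R : Type*} [CommSemiring R] [Algebra R A]
    {x : A} (hx : Algebra.adjoin R {x} = ⊤) {a : R} (ha : algebraMap R A a - x ∈ I) :
    Function.Surjective (algebraMap R (A ⧸ I)) := by
  have mk_x : Ideal.Quotient.mkₐ R I x = algebraMap R (A ⧸ I) a := (Ideal.Quotient.eq.mpr ha).symm
  rw [Algebra.surjective_algebraMap_iff, eq_comm]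
  calc (⊥ : Subalgebra R (A ⧸ I))
      = Algebra.adjoin R {Ideal.Quotient.mkₐ R I x} := by
        rw [mk_x, Algebra.adjoin_singleton_algebraMap]
    _ = (⊤ : Subalgebra R A).map (Ideal.Quotient.mkₐ R I) := by
        rw [← AlgHom.map_adjoin_singleton, hx]
    _ = ⊤ := by
        rw [Algebra.map_top, AlgHom.range_eq_top]
        exact Ideal.Quotient.mkₐ_surjective R I

theorem intCast_quotient_surjective_of_sub_mem {x : A} (hx : Algebra.adjoin ℤ {x} = ⊤)
    {n : ℤ} (hn : (n : A) - x ∈ I) : Function.Surjective (Int.cast : ℤ → A ⧸ I) :=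
  algebraMap_quotient_surjective_of_sub_mem hx hn

theorem intCast_mem_iff_natCard_quotient_dvd
    (h : Function.Surjective (Int.cast : ℤ → A ⧸ I)) (m : ℤ) :
    (m : A) ∈ I ↔ (Nat.card (A ⧸ I) : ℤ) ∣ m := by
  rw [← Ideal.Quotient.eq_zero_iff_mem, map_intCast, ← zsmul_one m,
    ← addOrderOf_dvd_iff_zsmul_eq_zero, addOrderOf_one_eq_natCard_of_intCast_surjective h]

end Quotient

section Zr

variable {K : Type*} [Field K]

theorem adjoin_rZ_eq_top (r : K) : Algebra.adjoin ℤ {rZ r} = ⊤ := by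
  have preimage_eq : ((↑) : Zr r → K) ⁻¹' {r} = {rZ r} := by
    ext x
    exact (Subtype.ext_iff (a2 := rZ r)).symm
  rw [← preimage_eq]
  exact Algebra.adjoin_adjoin_coe_preimage

variable {r : K} {I : Ideal (Zr r)}

theorem finite_Zr_quotient (hr : IsIntegral ℤ r) (hI : I ≠ ⊥) :
    Finite (Zr r ⧸ I) := by
  have : Module.Finite ℤ (Zr r) := Algebra.finite_adjoin_simple_of_isIntegral hr
  exact Ring.HasFiniteQuotients.finiteQuotient hI

theorem exists_intCast_sub_rZ_mem_of_rho_ne_zero (h : rho r I ≠ 0) :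
    ∃ n : ℤ, (n : Zr r) - rZ r ∈ I := by
  obtain ⟨⟨_, n, -, hn⟩⟩ := (Nat.card_ne_zero.mp h).1
  exact ⟨n, hn⟩

end Zr

theorem stmt_5_general {K : Type*} [Field K] {r : K} {I : Ideal (Zr r)} [Finite (Zr r ⧸ I)]
    (hrho : rho r I ≠ 0) (m : ℤ) : (m : Zr r) ∈ I ↔ (Nrm r I : ℤ) ∣ m := by
  obtain ⟨n, hn⟩ := exists_intCast_sub_rZ_mem_of_rho_ne_zero hrho
  have int_surjective : Function.Surjective (Int.cast : ℤ → Zr r ⧸ I) :=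
    intCast_quotient_surjective_of_sub_mem (adjoin_rZ_eq_top r) hn
  exact intCast_mem_iff_natCard_quotient_dvd int_surjective m

/-- Let `I` be a nonzero ideal of `ℤ[r]` with `gcd(N(I), Disc(f)) = 1` and
`ρ(I) = 1`. Then for every integer `m` one has `m ∈ I` if and only if `N(I) ∣ m`. -/
theorem stmt_5 (c₀ c₁ c₂ : ℤ)
    (hf : Irreducible (X ^ 3 + C c₂ * X ^ 2 + C c₁ * X + C c₀ : ℤ[X]))
    (K : Type*) [Field K] [NumberField K] (r : K)
    (hr : aeval r (X ^ 3 + C c₂ * X ^ 2 + C c₁ * X + C c₀ : ℤ[X]) = 0)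
    (hgen : Algebra.adjoin ℚ {r} = ⊤)
    (I : Ideal (Zr r)) (hI0 : I ≠ ⊥)
    (hgcd : Int.gcd (Nrm r I : ℤ) (discF c₀ c₁ c₂) = 1)
    (hrho : rho r I = 1) :
    ∀ m : ℤ, (m : Zr r) ∈ I ↔ (Nrm r I : ℤ) ∣ m := by
  have r_integral : IsIntegral ℤ r := ⟨_, by monicity!, hr⟩
  have := finite_Zr_quotient r_integral hI0
  exact stmt_5_general (hrho ▸ one_ne_zero)
end

section
/- There is a constant C (depending only on f) such that for all sufficiently large X, the sum ∑_{X < n < 2X} L₁(n, X), taken over integers n, satisfies |∑_{X < n < 2X} L₁(n, X) − X·log X| ≤ C·X. -/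
open Polynomial NumberField

open Classical in
/-- `L₁(n, X) = ∑_{P prime ideal of O_K, N(P) ≤ 3X} v_P((n − r))·log N(P)`, where
`v_P` is the exponent of `P` in the prime ideal factorization of the ideal `(n − r)`. -/
noncomputable def L1 {K : Type*} [Field K] [NumberField K] (rO : 𝓞 K) (n : ℤ) (Xr : ℝ) : ℝ :=
  ∑ᶠ P : Ideal (𝓞 K),
    if P.IsPrime ∧ (Nat.card ((𝓞 K) ⧸ P) : ℝ) ≤ 3 * Xr then
      (Multiset.count P
          (UniqueFactorizationMonoid.normalizedFactors
            (Ideal.span {(n : 𝓞 K) - rO})) : ℝ) * Real.log (Nat.card ((𝓞 K) ⧸ P))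
    else 0

/-!
Exchanging sums, the total is `∑_{N(P) ≤ 3Y} log N(P) · ∑_{k ≥ 1} #{n : n - r ∈ P ^ k}`. The `n`
counted lie in one residue class modulo the generator of `P ^ k ∩ ℤ`. Unless `P` divides `f'(r)`,
the existence of such an `n` forces `N(P)` to be a prime `p` and that generator to be `p ^ k`, so
the total is `Y ∑ log N(P) / N(P) + O(Y)`, and Mertens' first theorem for `K` finishes the proof.

Mertens' theorem comes from evaluating `∑ log N(MT + y)` in two ways, for `y` in the box of
algebraic integers with coordinates at most `T` and `M` a large constant. On one side every term
is `d log T + O(1)`, where `d = [K : ℚ]`. On the other, each term is a sum over the prime powers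
dividing `MT + y`, and a residue class modulo an ideal `I` meets the box `V / N(I)` times, up to
`O(T ^ (d - 1) N(I) ^ (1 / d - 1))`, with `V` the size of the box. This holds because every class
has a representative with coordinates `O(N(I) ^ (1 / d))`: by pigeonhole `I` contains a nonzero
`α` of that size, and one reduces modulo `α`. Chebyshev's bound controls the sum of the errors.
-/

section VonMangoldt

open ArithmeticFunction (vonMangoldt vonMangoldt_nonneg)

theorem sum_mul_le_of_sum_le_mul_of_antitone {a w : ℕ → ℝ} {C : ℝ} (hw_nonneg : ∀ n, 0 ≤ w n)
    (hw : ∀ n, 1 ≤ n → w (n + 1) ≤ w n) (ha : ∀ n : ℕ, ∑ i ∈ Finset.Icc 1 n, a i ≤ C * n)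
    (n : ℕ) : ∑ i ∈ Finset.Icc 1 n, a i * w i ≤ C * ∑ i ∈ Finset.Icc 1 n, w i := by
  suffices h : ∑ i ∈ Finset.Icc 1 n, a i * w i - C * ∑ i ∈ Finset.Icc 1 n, w i ≤
      (∑ i ∈ Finset.Icc 1 n, a i - C * n) * w n by
    nlinarith [ha n, hw_nonneg n]
  induction n with
  | zero => simp
  | succ n ih =>
    simp only [Finset.sum_Icc_succ_top (Nat.le_add_left 1 n), Nat.cast_succ]
    rcases Nat.eq_zero_or_pos n with rfl | hn
    · simp [sub_mul]
    · nlinarith [ha n, hw n hn]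

theorem rpow_le_rpow_succ_sub {s : ℝ} (hs : 0 < s) (hs1 : s ≤ 1) (n : ℕ) :
    (n : ℝ) ^ s ≤ ((n : ℝ) + 1) ^ s - s * ((n : ℝ) + 1) ^ (s - 1) := by
  have hn : (0 : ℝ) < n + 1 := by positivity
  have bernoulli := rpow_one_add_le_one_add_mul_self (s := -1 / ((n : ℝ) + 1))
    (by rw [le_div_iff₀ hn]; linarith [n.cast_nonneg (α := ℝ)]) hs.le hs1
  have ratio : 1 + -1 / ((n : ℝ) + 1) = n / (n + 1) := by field_simp; ring
  calc (n : ℝ) ^ s = ((n : ℝ) + 1) ^ s * (n / (n + 1)) ^ s := by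
        rw [← Real.mul_rpow hn.le (by positivity), mul_div_cancel₀ _ hn.ne']
    _ ≤ ((n : ℝ) + 1) ^ s * (1 + s * (-1 / ((n : ℝ) + 1))) := by
        rw [← ratio]; gcongr
    _ = ((n : ℝ) + 1) ^ s - s * ((n : ℝ) + 1) ^ (s - 1) := by
        rw [Real.rpow_sub_one hn.ne']; ring

theorem sum_Icc_rpow_sub_one_le {s : ℝ} (hs : 0 < s) (hs1 : s ≤ 1) (n : ℕ) :
    ∑ i ∈ Finset.Icc 1 n, (i : ℝ) ^ (s - 1) ≤ n ^ s / s := by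
  rw [le_div_iff₀ hs]
  induction n with
  | zero => simp [Real.zero_rpow hs.ne']
  | succ n ih =>
    rw [Finset.sum_Icc_succ_top (Nat.le_add_left 1 n), Nat.cast_succ]
    linarith [rpow_le_rpow_succ_sub hs hs1 n]

theorem exists_sum_vonMangoldt_le_mul :
    ∃ C ≥ 0, ∀ n : ℕ, ∑ i ∈ Finset.Icc 1 n, vonMangoldt i ≤ C * n := by
  refine ⟨Real.log 4 + 4, by positivity, fun n => ?_⟩
  have psi_le := Chebyshev.psi_le_const_mul_self (x := (n : ℝ)) n.cast_nonneg
  rwa [Chebyshev.psi, Nat.floor_natCast] at psi_le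

theorem exists_sum_vonMangoldt_mul_rpow_le {s : ℝ} (hs : 0 < s) (hs1 : s ≤ 1) :
    ∃ C ≥ 0, ∀ n : ℕ, ∑ i ∈ Finset.Icc 1 n, vonMangoldt i * (i : ℝ) ^ (s - 1) ≤ C * n ^ s := by
  obtain ⟨C, hC, chebyshev⟩ := exists_sum_vonMangoldt_le_mul
  refine ⟨C / s, by positivity, fun n => ?_⟩
  calc ∑ i ∈ Finset.Icc 1 n, vonMangoldt i * (i : ℝ) ^ (s - 1)
      ≤ C * ∑ i ∈ Finset.Icc 1 n, (i : ℝ) ^ (s - 1) :=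
        sum_mul_le_of_sum_le_mul_of_antitone (fun _ => by positivity)
          (fun n hn => Real.rpow_le_rpow_of_nonpos (by positivity) (by simp) (by linarith))
          chebyshev n
    _ ≤ C * (n ^ s / s) := by gcongr; exact sum_Icc_rpow_sub_one_le hs hs1 n
    _ = C / s * n ^ s := by ring

theorem exists_sum_vonMangoldt_div_not_prime_le :
    ∃ C ≥ 0, ∀ n : ℕ,
      ∑ i ∈ Finset.Icc 1 n, vonMangoldt i * (if i.Prime then 0 else (i : ℝ)⁻¹) ≤ C := by
  set F : ℕ → ℝ := fun i => vonMangoldt i * (if i.Prime then 0 else (i : ℝ)⁻¹)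
  have F_nonneg (i : ℕ) : 0 ≤ F i := mul_nonneg vonMangoldt_nonneg (by positivity)
  have F_summable : Summable F := by
    convert ArithmeticFunction.vonMangoldt.summable_residueClass_non_primes_div
      (q := 1) (a := 1) using 2 with i
    have : vonMangoldt.residueClass (1 : ZMod 1) i = vonMangoldt i := by
      rw [vonMangoldt.residueClass, Set.indicator_of_mem]
      exact Subsingleton.elim _ _
    simp only [F, this]
    split_ifs <;> simp [div_eq_mul_inv]
  exact ⟨∑' i, F i, tsum_nonneg F_nonneg,
    fun n => F_summable.sum_le_tsum _ fun i _ => F_nonneg i⟩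

end VonMangoldt

section PrimeIdeals

open UniqueFactorizationMonoid (normalizedFactors)
open ArithmeticFunction (vonMangoldt vonMangoldt_nonneg)

section Dedekind

variable {R : Type*} [CommRing R] [IsDedekindDomain R]

open Classical in
theorem prime_pow_dvd_iff_le_count_normalizedFactors {P J : Ideal R} (hP : Prime P) (hJ : J ≠ ⊥)
    (k : ℕ) : P ^ k ∣ J ↔ k ≤ (normalizedFactors J).count P := by
  rw [pow_dvd_iff_le_emultiplicity,
    UniqueFactorizationMonoid.emultiplicity_eq_count_normalizedFactors hP.irreducible hJ,
    normalize_eq, Nat.cast_le]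

open Classical in
theorem count_normalizedFactors_eq_card_filter_pow_dvd {P J : Ideal R} (hP : Prime P) (hJ : J ≠ ⊥)
    {L : ℕ} (hL : ∀ k, P ^ k ∣ J → k ≤ L) :
    (normalizedFactors J).count P = {k ∈ Finset.Icc 1 L | P ^ k ∣ J}.card := by
  have count_le := hL _ ((prime_pow_dvd_iff_le_count_normalizedFactors hP hJ _).2 le_rfl)
  have : {k ∈ Finset.Icc 1 L | P ^ k ∣ J} = Finset.Icc 1 ((normalizedFactors J).count P) := by
    ext k
    rw [Finset.mem_filter, Finset.mem_Icc, Finset.mem_Icc,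
      prime_pow_dvd_iff_le_count_normalizedFactors hP hJ k]
    omega
  simp [this]

end Dedekind

variable {K : Type*} [Field K] [NumberField K]

theorem absNorm_le_absNorm_of_dvd {I J : Ideal (𝓞 K)} (hJ : J ≠ ⊥) (h : I ∣ J) :
    Ideal.absNorm I ≤ Ideal.absNorm J :=
  Nat.le_of_dvd (Nat.pos_of_ne_zero (Ideal.absNorm_eq_zero_iff.not.2 hJ)) (map_dvd _ h)

theorem prime_of_absNorm_prime {P : Ideal (𝓞 K)} (hP : (Ideal.absNorm P).Prime) : Prime P :=
  UniqueFactorizationMonoid.irreducible_iff_prime.1 (Ideal.irreducible_of_irreducible_absNorm hP)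

theorem two_le_absNorm_of_prime {P : Ideal (𝓞 K)} (hP : Prime P) : 2 ≤ Ideal.absNorm P := by
  have ne_zero : Ideal.absNorm P ≠ 0 := Ideal.absNorm_eq_zero_iff.not.2 hP.ne_zero
  have ne_one : Ideal.absNorm P ≠ 1 :=
    Ideal.absNorm_eq_one_iff.not.2 (Ideal.isPrime_of_prime hP).ne_top
  omega

theorem exists_prime_mem_absNorm_eq_pow {P : Ideal (𝓞 K)} (hP : Prime P) :
    ∃ p n : ℕ, p.Prime ∧ n ≠ 0 ∧ (p : 𝓞 K) ∈ P ∧ Ideal.absNorm P = p ^ n := by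
  have : P.IsMaximal := (Ideal.isPrime_of_prime hP).isMaximal hP.ne_zero
  obtain ⟨p, n, hn, hpP, hp, hPn⟩ := Ideal.exists_prime_and_absNorm_eq_pow P
  exact ⟨p, n, hp, hn.ne', hpP, hPn⟩

theorem sum_log_absNorm_le_finrank_mul_vonMangoldt (s : Finset (Ideal (𝓞 K))) (n : ℕ)
    (hs : ∀ P ∈ s, Prime P ∧ ∃ k ≠ 0, Ideal.absNorm P ^ k = n) :
    ∑ P ∈ s, Real.log (Ideal.absNorm P) ≤ Module.finrank ℤ (𝓞 K) * vonMangoldt n := by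
  rcases s.eq_empty_or_nonempty with rfl | ⟨Q, hQs⟩
  · simpa using mul_nonneg (Nat.cast_nonneg _) vonMangoldt_nonneg
  obtain ⟨hQ, k, hk, rfl⟩ := hs Q hQs
  obtain ⟨p, m, hp, hm, -, hQp⟩ := exists_prime_mem_absNorm_eq_pow hQ
  rw [hQp, ← pow_mul] at hs ⊢
  rw [ArithmeticFunction.vonMangoldt_apply_pow (mul_ne_zero hm hk),
    ArithmeticFunction.vonMangoldt_apply_prime hp, ← Real.log_pow, ← Real.log_prod fun P hP =>
      Nat.cast_ne_zero.2 (by have := two_le_absNorm_of_prime (hs P hP).1; omega)]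
  have prod_dvd_span : ∏ P ∈ s, P ∣ Ideal.span {(p : 𝓞 K)} := by
    refine Finset.prod_primes_dvd _ (fun P hP => (hs P hP).1) fun P hP => ?_
    obtain ⟨hP, j, hj, hPj⟩ := hs P hP
    have mem_pow := Ideal.absNorm_mem (P ^ j)
    rw [map_pow, hPj, Nat.cast_pow] at mem_pow
    have hP' := Ideal.isPrime_of_prime hP
    rw [Ideal.dvd_span_singleton]
    exact hP'.mem_of_pow_mem _ (Ideal.pow_le_self hj mem_pow)
  have prod_dvd_pow := map_dvd Ideal.absNorm prod_dvd_span
  rw [map_prod, Ideal.absNorm_span_natCast] at prod_dvd_pow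
  have prod_le_pow := Nat.le_of_dvd (pow_pos hp.pos _) prod_dvd_pow
  refine Real.log_le_log ?_ (by exact_mod_cast prod_le_pow)
  exact Finset.prod_pos fun P hP =>
    Nat.cast_pos.2 (by have := two_le_absNorm_of_prime (hs P hP).1; omega)

variable (K) in
open Classical in
/-- The nonzero prime ideals of `𝓞 K` of norm at most `x`. -/
noncomputable def primesLE (x : ℕ) : Finset (Ideal (𝓞 K)) :=
  {P ∈ (Ideal.finite_setOfPred_absNorm_le (S := 𝓞 K) x).toFinset | Prime P}

theorem mem_primesLE {x : ℕ} {P : Ideal (𝓞 K)} :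
    P ∈ primesLE K x ↔ Prime P ∧ Ideal.absNorm P ≤ x := by
  simp [primesLE, and_comm]

theorem primesLE_mono : Monotone (primesLE K) := fun _ _ hxy _ hP =>
  mem_primesLE.2 ⟨(mem_primesLE.1 hP).1, (mem_primesLE.1 hP).2.trans hxy⟩

variable (K) in
open Classical in
/-- The prime powers of `𝓞 K` of norm at most `x`, the power `P ^ k` with `1 ≤ k` being recorded
as the pair `(P, k)`. -/
noncomputable def primePowersLE (x : ℕ) : Finset (Ideal (𝓞 K) × ℕ) :=
  {q ∈ primesLE K x ×ˢ Finset.Icc 1 x | Ideal.absNorm q.1 ^ q.2 ≤ x}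

theorem mem_primePowersLE {x : ℕ} {q : Ideal (𝓞 K) × ℕ} :
    q ∈ primePowersLE K x ↔ Prime q.1 ∧ 1 ≤ q.2 ∧ Ideal.absNorm q.1 ^ q.2 ≤ x := by
  simp only [primePowersLE, Finset.mem_filter, Finset.mem_product, mem_primesLE, Finset.mem_Icc]
  refine ⟨fun ⟨⟨⟨hP, _⟩, hk, _⟩, h⟩ => ⟨hP, hk, h⟩, fun ⟨hP, hk, h⟩ =>
    ⟨⟨⟨hP, ?_⟩, hk, ?_⟩, h⟩⟩
  · exact (Nat.le_self_pow (by omega) _).trans h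
  · exact (Nat.lt_pow_self (two_le_absNorm_of_prime hP)).le.trans h

theorem sum_primePowersLE_le_sum_vonMangoldt {g : ℕ → ℝ} (hg : ∀ n, 0 ≤ g n) (x : ℕ) :
    ∑ q ∈ primePowersLE K x, Real.log (Ideal.absNorm q.1) * g (Ideal.absNorm q.1 ^ q.2) ≤
      Module.finrank ℤ (𝓞 K) * ∑ n ∈ Finset.Icc 1 x, vonMangoldt n * g n := by
  classical
  have absNorm_pow_mem : ∀ q ∈ primePowersLE K x, Ideal.absNorm q.1 ^ q.2 ∈ Finset.Icc 1 x := by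
    intro q hq
    obtain ⟨hP, -, hx⟩ := mem_primePowersLE.1 hq
    exact Finset.mem_Icc.2 ⟨Nat.one_le_pow _ _ (by have := two_le_absNorm_of_prime hP; omega), hx⟩
  rw [← Finset.sum_fiberwise_of_maps_to absNorm_pow_mem, Finset.mul_sum]
  refine Finset.sum_le_sum fun n _ => ?_
  set fiber := {q ∈ primePowersLE K x | Ideal.absNorm q.1 ^ q.2 = n}
  have hfiber {q} (hq : q ∈ fiber) : Prime q.1 ∧ 1 ≤ q.2 ∧ Ideal.absNorm q.1 ^ q.2 = n :=
    have ⟨hq, hn⟩ := Finset.mem_filter.1 hq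
    ⟨(mem_primePowersLE.1 hq).1, (mem_primePowersLE.1 hq).2.1, hn⟩
  have fst_injOn : Set.InjOn Prod.fst (fiber : Set (Ideal (𝓞 K) × ℕ)) := by
    intro q hq q' hq' h
    refine Prod.ext h (Nat.pow_right_injective (two_le_absNorm_of_prime (hfiber hq).1) ?_)
    change Ideal.absNorm q.1 ^ q.2 = Ideal.absNorm q.1 ^ q'.2
    rw [(hfiber hq).2.2, h, (hfiber hq').2.2]
  calc ∑ q ∈ fiber, Real.log (Ideal.absNorm q.1) * g (Ideal.absNorm q.1 ^ q.2)
      = (∑ P ∈ fiber.image Prod.fst, Real.log (Ideal.absNorm P)) * g n := by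
        rw [Finset.sum_image fst_injOn, Finset.sum_mul]
        exact Finset.sum_congr rfl fun q hq => by rw [(hfiber hq).2.2]
    _ ≤ Module.finrank ℤ (𝓞 K) * vonMangoldt n * g n := by
        gcongr
        · exact hg n
        refine sum_log_absNorm_le_finrank_mul_vonMangoldt _ n fun P hP => ?_
        obtain ⟨q, hq, rfl⟩ := Finset.mem_image.1 hP
        have ⟨hP, hk, hn⟩ := hfiber hq
        exact ⟨hP, q.2, by omega, hn⟩
    _ = Module.finrank ℤ (𝓞 K) * (vonMangoldt n * g n) := mul_assoc _ _ _

theorem sum_primesLE_le_sum_vonMangoldt {g : ℕ → ℝ} (hg : ∀ n, 0 ≤ g n) {k : ℕ} (hk : 1 ≤ k)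
    (x : ℕ) :
    ∑ P ∈ primesLE K x, Real.log (Ideal.absNorm P) * g (Ideal.absNorm P ^ k) ≤
      Module.finrank ℤ (𝓞 K) * ∑ n ∈ Finset.Icc 1 (x ^ k), vonMangoldt n * g n := by
  classical
  refine le_trans ?_ (sum_primePowersLE_le_sum_vonMangoldt hg (x ^ k))
  rw [← Finset.sum_image (g := (·, k))
    (f := fun q => Real.log (Ideal.absNorm q.1) * g (Ideal.absNorm q.1 ^ q.2))
    (Prod.mk_left_injective k).injOn]
  refine Finset.sum_le_sum_of_subset_of_nonneg (Finset.image_subset_iff.2 fun P hP => ?_)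
    fun q _ _ => mul_nonneg (Real.log_natCast_nonneg _) (hg _)
  have ⟨hP, hx⟩ := mem_primesLE.1 hP
  exact mem_primePowersLE.2 ⟨hP, hk, Nat.pow_le_pow_left hx k⟩

variable (K) in
theorem exists_sum_primesLE_log_mul_rpow_le {s : ℝ} (hs : 0 < s) (hs1 : s ≤ 1) :
    ∃ C ≥ 0, ∀ x : ℕ, ∑ P ∈ primesLE K x,
      Real.log (Ideal.absNorm P) * (Ideal.absNorm P : ℝ) ^ (s - 1) ≤ C * x ^ s := by
  obtain ⟨C, hC, h⟩ := exists_sum_vonMangoldt_mul_rpow_le hs hs1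
  refine ⟨Module.finrank ℤ (𝓞 K) * C, by positivity, fun x => ?_⟩
  have le_vonMangoldt := sum_primesLE_le_sum_vonMangoldt (K := K)
    (g := fun n => (n : ℝ) ^ (s - 1)) (fun _ => by positivity) le_rfl x
  simp only [pow_one] at le_vonMangoldt
  calc _ ≤ _ := le_vonMangoldt
    _ ≤ Module.finrank ℤ (𝓞 K) * (C * x ^ s) := by gcongr; exact h x
    _ = _ := (mul_assoc _ _ _).symm

theorem log_le_log_add_mul_rpow {a x : ℝ} (ha : 2 ≤ a) (hx : 0 < x) :
    Real.log x ≤ Real.log a +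
      2 / Real.log 2 * x ^ (1 / 2 : ℝ) * (Real.log a * a ^ (1 / 2 - 1 : ℝ)) := by
  have ha_pos : 0 < a := by linarith
  have log_ratio_le := Real.log_le_rpow_div (x := x / a) (by positivity) (one_half_pos (α := ℝ))
  have one_le : 1 ≤ Real.log a / Real.log 2 := by
    rw [one_le_div (Real.log_pos one_lt_two)]; exact Real.log_le_log two_pos ha
  rw [Real.log_div hx.ne' ha_pos.ne', sub_le_iff_le_add'] at log_ratio_le
  refine log_ratio_le.trans (add_le_add_right ?_ _)
  calc (x / a) ^ (1 / 2 : ℝ) / (1 / 2)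
      = 1 * (2 * x ^ (1 / 2 : ℝ) * a ^ (1 / 2 - 1 : ℝ)) := by
        rw [Real.div_rpow hx.le ha_pos.le, show (1 / 2 - 1 : ℝ) = -(1 / 2) by norm_num,
          Real.rpow_neg ha_pos.le]
        ring
    _ ≤ Real.log a / Real.log 2 * (2 * x ^ (1 / 2 : ℝ) * a ^ (1 / 2 - 1 : ℝ)) := by gcongr
    _ = _ := by ring

variable (K) in
theorem exists_card_primesLE_mul_log_le :
    ∃ C ≥ 0, ∀ x : ℕ, (primesLE K x).card * Real.log x ≤ C * x := by
  obtain ⟨C₁, hC₁, sum_log_le⟩ := exists_sum_primesLE_log_mul_rpow_le K one_pos le_rfl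
  obtain ⟨C₂, hC₂, sum_log_sqrt_le⟩ :=
    exists_sum_primesLE_log_mul_rpow_le K (s := 1 / 2) (by norm_num) (by norm_num)
  have := Real.log_pos one_lt_two
  refine ⟨C₁ + 2 / Real.log 2 * C₂, by positivity, fun x => ?_⟩
  have log_le : ∀ P ∈ primesLE K x, Real.log x ≤ Real.log (Ideal.absNorm P) +
      2 / Real.log 2 * (x : ℝ) ^ (1 / 2 : ℝ) *
        (Real.log (Ideal.absNorm P) * (Ideal.absNorm P : ℝ) ^ (1 / 2 - 1 : ℝ)) := by
    intro P hP
    have ⟨hP, hPx⟩ := mem_primesLE.1 hP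
    have two_le := two_le_absNorm_of_prime hP
    exact log_le_log_add_mul_rpow (by exact_mod_cast two_le) (by norm_cast; omega)
  have sqrt_mul_sqrt : (x : ℝ) ^ (1 / 2 : ℝ) * (x : ℝ) ^ (1 / 2 : ℝ) = x := by
    rw [← Real.sqrt_eq_rpow, Real.mul_self_sqrt x.cast_nonneg]
  simp only [sub_self, Real.rpow_zero, mul_one, Real.rpow_one] at sum_log_le
  calc (primesLE K x).card * Real.log x = ∑ _P ∈ primesLE K x, Real.log x := by simp
    _ ≤ C₁ * x + 2 / Real.log 2 * (x : ℝ) ^ (1 / 2 : ℝ) * (C₂ * (x : ℝ) ^ (1 / 2 : ℝ)) := by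
        refine (Finset.sum_le_sum log_le).trans ?_
        rw [Finset.sum_add_distrib, ← Finset.mul_sum]
        gcongr
        exacts [sum_log_le x, sum_log_sqrt_le x]
    _ = (C₁ + 2 / Real.log 2 * C₂) * x := by
        linear_combination 2 / Real.log 2 * C₂ * sqrt_mul_sqrt

variable (K) in
theorem exists_sum_primePowersLE_not_prime_le :
    ∃ C ≥ 0, ∀ x : ℕ, ∑ q ∈ primePowersLE K x, Real.log (Ideal.absNorm q.1) *
      (if (Ideal.absNorm q.1 ^ q.2).Prime then 0 else ((Ideal.absNorm q.1 ^ q.2 : ℕ) : ℝ)⁻¹) ≤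
        C := by
  obtain ⟨C, hC, h⟩ := exists_sum_vonMangoldt_div_not_prime_le
  refine ⟨Module.finrank ℤ (𝓞 K) * C, by positivity, fun x => ?_⟩
  refine (sum_primePowersLE_le_sum_vonMangoldt (g := fun n => if n.Prime then 0 else (n : ℝ)⁻¹)
    (fun n => by positivity) x).trans ?_
  gcongr
  exact h x

variable (K) in
theorem exists_sum_primesLE_log_div_not_prime_le {k : ℕ} (hk : 1 ≤ k) :
    ∃ C ≥ 0, ∀ x : ℕ, ∑ P ∈ primesLE K x with ¬(Ideal.absNorm P ^ k).Prime,
      Real.log (Ideal.absNorm P) / (Ideal.absNorm P : ℝ) ^ k ≤ C := by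
  obtain ⟨C, hC, h⟩ := exists_sum_vonMangoldt_div_not_prime_le
  refine ⟨Module.finrank ℤ (𝓞 K) * C, by positivity, fun x => ?_⟩
  calc _ = ∑ P ∈ primesLE K x, Real.log (Ideal.absNorm P) *
        (if (Ideal.absNorm P ^ k).Prime then 0 else ((Ideal.absNorm P ^ k : ℕ) : ℝ)⁻¹) := by
        rw [Finset.sum_filter]
        refine Finset.sum_congr rfl fun P _ => ?_
        split_ifs <;> simp [div_eq_mul_inv]
    _ ≤ _ := sum_primesLE_le_sum_vonMangoldt (g := fun n => if n.Prime then 0 else (n : ℝ)⁻¹)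
        (fun n => by positivity) hk x
    _ ≤ _ := by gcongr; exact h (x ^ k)

open Classical in
theorem log_absNorm_eq_sum_primesLE {J : Ideal (𝓞 K)} (hJ : J ≠ ⊥) {x : ℕ}
    (hx : Ideal.absNorm J ≤ x) :
    Real.log (Ideal.absNorm J) =
      ∑ P ∈ primesLE K x, (normalizedFactors J).count P * Real.log (Ideal.absNorm P) := by
  have factors_subset : (normalizedFactors J).toFinset ⊆ primesLE K x := by
    intro P hP
    rw [Multiset.mem_toFinset] at hP
    have P_dvd := UniqueFactorizationMonoid.dvd_of_mem_normalizedFactors hP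
    exact mem_primesLE.2 ⟨UniqueFactorizationMonoid.prime_of_normalized_factor P hP,
      (absNorm_le_absNorm_of_dvd hJ P_dvd).trans hx⟩
  conv_lhs => rw [← Ideal.prod_normalizedFactors_eq_self hJ,
    Finset.prod_multiset_count_of_subset _ _ factors_subset, map_prod, Nat.cast_prod,
    Real.log_prod fun P hP => Nat.cast_ne_zero.2 (Ideal.absNorm_eq_zero_iff.not.2
      (pow_ne_zero _ (mem_primesLE.1 hP).1.ne_zero))]
  simp only [map_pow, Nat.cast_pow, Real.log_pow]

open Classical in
theorem log_absNorm_eq_sum_primePowersLE {J : Ideal (𝓞 K)} (hJ : J ≠ ⊥) {x : ℕ}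
    (hx : Ideal.absNorm J ≤ x) :
    Real.log (Ideal.absNorm J) =
      ∑ q ∈ primePowersLE K x with q.1 ^ q.2 ∣ J, Real.log (Ideal.absNorm q.1) := by
  have absNorm_pow_le {P : Ideal (𝓞 K)} {k : ℕ} (h : P ^ k ∣ J) : Ideal.absNorm P ^ k ≤ x := by
    rw [← map_pow]
    exact (absNorm_le_absNorm_of_dvd hJ h).trans hx
  rw [log_absNorm_eq_sum_primesLE hJ hx, primePowersLE, Finset.filter_filter, Finset.sum_filter,
    Finset.sum_product]
  refine Finset.sum_congr rfl fun P hP => ?_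
  have hP := (mem_primesLE.1 hP).1
  rw [count_normalizedFactors_eq_card_filter_pow_dvd hP hJ (L := x) fun k hk =>
    (Nat.lt_pow_self (two_le_absNorm_of_prime hP)).le.trans (absNorm_pow_le hk),
    ← nsmul_eq_mul, ← Finset.sum_const, Finset.sum_filter]
  exact Finset.sum_congr rfl fun k _ => if_congr ⟨fun h => ⟨absNorm_pow_le h, h⟩, And.right⟩ rfl rfl

open Classical in
theorem sum_log_absNorm_eq_sum_primePowersLE {ι : Type*} (s : Finset ι) (J : ι → Ideal (𝓞 K))
    (hJ : ∀ y ∈ s, J y ≠ ⊥) {x : ℕ} (hx : ∀ y ∈ s, Ideal.absNorm (J y) ≤ x) :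
    ∑ y ∈ s, Real.log (Ideal.absNorm (J y)) = ∑ q ∈ primePowersLE K x,
      Real.log (Ideal.absNorm q.1) * {y ∈ s | q.1 ^ q.2 ∣ J y}.card := by
  rw [Finset.sum_congr rfl fun y hy => log_absNorm_eq_sum_primePowersLE (hJ y hy) (hx y hy)]
  simp only [Finset.sum_filter]
  rw [Finset.sum_comm]
  refine Finset.sum_congr rfl fun q _ => ?_
  rw [← Finset.sum_filter, Finset.sum_const, nsmul_eq_mul, mul_comm]

end PrimeIdeals

section CoordinateBoxes

theorem pow_sub_pow_le_mul {u v w : ℝ} (hu : 0 ≤ u) (huv : u ≤ v) (hvw : v ≤ w) (n : ℕ) :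
    v ^ n - u ^ n ≤ (v - u) * n * w ^ (n - 1) := by
  have hv : 0 ≤ v := hu.trans huv
  have h := (le_abs_self _).trans (abs_pow_sub_pow_le v u n)
  rw [abs_of_nonneg (sub_nonneg.2 huv), abs_of_nonneg hu, abs_of_nonneg hv, max_eq_left huv] at h
  exact h.trans (mul_le_mul_of_nonneg_left (by gcongr)
    (mul_nonneg (sub_nonneg.2 huv) n.cast_nonneg))

variable {ι M : Type*} [Fintype ι] [AddCommGroup M] (b : Module.Basis ι ℤ M)

open Classical in
/-- The elements of a lattice all of whose coordinates with respect to the basis `b` are at most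
`T` in absolute value. -/
noncomputable def coordBox (T : ℕ) : Finset M :=
  (Fintype.piFinset fun _ : ι => Finset.Icc (-(T : ℤ)) T).map
    b.equivFun.symm.toEquiv.toEmbedding

variable {b}

theorem mem_coordBox {T : ℕ} {x : M} : x ∈ coordBox b T ↔ ∀ i, |b.repr x i| ≤ T := by
  classical
  simp only [coordBox, Finset.mem_map_equiv, Fintype.mem_piFinset, Finset.mem_Icc, abs_le]
  rfl

theorem card_coordBox (T : ℕ) : (coordBox b T).card = (2 * T + 1) ^ Module.finrank ℤ M := by
  classical
  rw [coordBox, Finset.card_map, Fintype.card_piFinset, Module.finrank_eq_card_basis b]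
  simp only [Int.card_Icc, Finset.prod_const, Finset.card_univ]
  congr 1
  omega

theorem add_mem_coordBox {S T : ℕ} {x y : M} (hx : x ∈ coordBox b S) (hy : y ∈ coordBox b T) :
    x + y ∈ coordBox b (S + T) := by
  rw [mem_coordBox] at *
  intro i
  rw [map_add, Finsupp.add_apply, Nat.cast_add]
  exact (abs_add_le _ _).trans (add_le_add (hx i) (hy i))

theorem exists_ne_zero_mem_coordBox_of_index_lt (H : AddSubgroup M) [H.FiniteIndex] {s : ℕ}
    (hs : H.index < (s + 1) ^ Module.finrank ℤ M) : ∃ α ∈ H, α ≠ 0 ∧ α ∈ coordBox b s := by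
  classical
  have := Fintype.ofFinite (M ⧸ H)
  let cube : Finset (ι → ℤ) := Fintype.piFinset fun _ => Finset.Icc (0 : ℤ) s
  have card_cube : cube.card = (s + 1) ^ Module.finrank ℤ M := by
    rw [Fintype.card_piFinset, Module.finrank_eq_card_basis b]
    simp only [Int.card_Icc, Finset.prod_const, Finset.card_univ]
    congr 1
  have card_lt : (Finset.univ : Finset (M ⧸ H)).card < cube.card := by
    rwa [card_cube, Finset.card_univ, ← Nat.card_eq_fintype_card]
  obtain ⟨u, hu, v, hv, huv, same_class⟩ := Finset.exists_ne_map_eq_of_card_lt_of_maps_to card_lt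
    (f := fun a => (b.equivFun.symm a : M ⧸ H)) (by simp [Set.MapsTo])
  refine ⟨b.equivFun.symm (v - u), ?_, ?_, mem_coordBox.2 fun i => ?_⟩
  · rw [map_sub, sub_eq_neg_add]; exact QuotientAddGroup.eq.1 same_class
  · rw [Ne, LinearEquiv.map_eq_zero_iff, sub_eq_zero]; exact huv.symm
  · rw [← Module.Basis.equivFun_apply, LinearEquiv.apply_symm_apply, Pi.sub_apply, abs_le]
    simp only [cube, Fintype.mem_piFinset, Finset.mem_Icc] at hu hv
    constructor <;> linarith [hu i, hv i]

section Cosets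

variable {H : AddSubgroup M} {D : ℕ}

open Classical in
theorem card_filter_add_mem_le (hD : ∀ x, ∃ y ∈ coordBox b D, x - y ∈ H) (T : ℕ) (a a' : M) :
    {y ∈ coordBox b T | a + y ∈ H}.card ≤ {y ∈ coordBox b (T + D) | a' + y ∈ H}.card := by
  obtain ⟨z, hz, hza⟩ := hD (a - a')
  refine Finset.card_le_card_of_injOn (· + z) (fun y hy => ?_) (add_left_injective z).injOn
  rw [Finset.mem_coe, Finset.mem_filter] at hy ⊢
  refine ⟨add_mem_coordBox hy.1 hz, ?_⟩
  have shift : a' + (y + z) = a + y - (a - a' - z) := by abel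
  exact shift ▸ H.sub_mem hy.2 hza

open Classical in
theorem sum_card_filter_neg_out_add_mem [Fintype (M ⧸ H)] (s : Finset M) :
    ∑ q : M ⧸ H, {y ∈ s | -q.out + y ∈ H}.card = s.card := by
  rw [Finset.card_eq_sum_card_fiberwise (f := ((↑) : M → M ⧸ H)) (t := Finset.univ)
    (by simp [Set.MapsTo])]
  refine Finset.sum_congr rfl fun q _ => congrArg _ (Finset.filter_congr fun y _ => ?_)
  rw [← QuotientAddGroup.eq, QuotientAddGroup.out_eq', eq_comm]

open Classical in
theorem index_mul_card_filter_add_mem_le [H.FiniteIndex]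
    (hD : ∀ x, ∃ y ∈ coordBox b D, x - y ∈ H) (T : ℕ) (a : M) :
    H.index * {y ∈ coordBox b T | a + y ∈ H}.card ≤ (2 * (T + D) + 1) ^ Module.finrank ℤ M := by
  have := Fintype.ofFinite (M ⧸ H)
  rw [← card_coordBox (b := b),
    ← sum_card_filter_neg_out_add_mem (H := H) (coordBox b (T + D)), AddSubgroup.index,
    Nat.card_eq_fintype_card, ← Finset.card_univ, ← smul_eq_mul, ← Finset.sum_const]
  exact Finset.sum_le_sum fun q _ => card_filter_add_mem_le hD T a _

open Classical in
theorem le_index_mul_card_filter_add_mem [H.FiniteIndex]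
    (hD : ∀ x, ∃ y ∈ coordBox b D, x - y ∈ H) (T : ℕ) (a : M) :
    (2 * T + 1) ^ Module.finrank ℤ M ≤ H.index * {y ∈ coordBox b (T + D) | a + y ∈ H}.card := by
  have := Fintype.ofFinite (M ⧸ H)
  rw [← card_coordBox (b := b), ← sum_card_filter_neg_out_add_mem (H := H), AddSubgroup.index,
    Nat.card_eq_fintype_card, ← Finset.card_univ, ← smul_eq_mul, ← Finset.sum_const]
  exact Finset.sum_le_sum fun q _ => card_filter_add_mem_le hD T _ a

open Classical in
theorem abs_index_mul_card_filter_add_mem_sub_le [H.FiniteIndex] [Nontrivial M]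
    (hD : ∀ x, ∃ y ∈ coordBox b D, x - y ∈ H) (T : ℕ) (a : M) :
    |(H.index : ℝ) * {y ∈ coordBox b T | a + y ∈ H}.card -
        (2 * (T : ℝ) + 1) ^ Module.finrank ℤ M| ≤
      2 * D * Module.finrank ℤ M * (2 * ((T : ℝ) + D) + 1) ^ (Module.finrank ℤ M - 1) := by
  have := Module.Finite.of_basis b
  have := Module.Free.of_basis b
  set d := Module.finrank ℤ M
  have hd : 0 < d := Module.finrank_pos
  have upper : (H.index : ℝ) * {y ∈ coordBox b T | a + y ∈ H}.card ≤ (2 * ((T : ℝ) + D) + 1) ^ d :=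
    mod_cast index_mul_card_filter_add_mem_le hD T a
  have hD_nonneg : (0 : ℝ) ≤ D := D.cast_nonneg
  rw [abs_le']
  constructor
  · calc _ ≤ (2 * ((T : ℝ) + D) + 1) ^ d - (2 * (T : ℝ) + 1) ^ d := sub_le_sub_right upper _
      _ ≤ (2 * ((T : ℝ) + D) + 1 - (2 * T + 1)) * d * (2 * ((T : ℝ) + D) + 1) ^ (d - 1) :=
        pow_sub_pow_le_mul (by positivity) (by linarith) le_rfl d
      _ = _ := by ring
  rw [neg_sub]
  rcases le_or_gt D T with hDT | hTD
  · obtain ⟨S, rfl⟩ := Nat.exists_eq_add_of_le' hDT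
    have lower : (2 * (S : ℝ) + 1) ^ d ≤ H.index * {y ∈ coordBox b (S + D) | a + y ∈ H}.card :=
      mod_cast le_index_mul_card_filter_add_mem hD S a
    calc _ ≤ (2 * ((S + D : ℕ) : ℝ) + 1) ^ d - (2 * (S : ℝ) + 1) ^ d := sub_le_sub_left lower _
      _ ≤ (2 * ((S + D : ℕ) : ℝ) + 1 - (2 * S + 1)) * d *
            (2 * (((S + D : ℕ) : ℝ) + D) + 1) ^ (d - 1) :=
        pow_sub_pow_le_mul (by positivity) (by push_cast; linarith) (by linarith) d
      _ = _ := by push_cast; ring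
  · calc (2 * (T : ℝ) + 1) ^ d - H.index * {y ∈ coordBox b T | a + y ∈ H}.card
        ≤ (2 * (T : ℝ) + 1) ^ d := sub_le_self _ (by positivity)
      _ = (2 * (T : ℝ) + 1) * 1 * (2 * (T : ℝ) + 1) ^ (d - 1) := by
          rw [mul_one, mul_pow_sub_one hd.ne']
      _ ≤ 2 * D * d * (2 * ((T : ℝ) + D) + 1) ^ (d - 1) := by
          have : (T : ℝ) + 1 ≤ D := mod_cast hTD
          gcongr
          · linarith
          · exact_mod_cast hd
          · linarith

end Cosets

end CoordinateBoxes

section IntegerBoxes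

variable {K : Type*} [Field K] [NumberField K]

theorem exists_mul_mem_coordBox {ι R : Type*} [Fintype ι] [CommRing R] (b : Module.Basis ι ℤ R) :
    ∃ C : ℕ, ∀ s : ℕ, ∀ α ∈ coordBox b s, ∀ i, α * b i ∈ coordBox b (C * s) := by
  refine ⟨∑ i, ∑ j, ∑ k, (b.repr (b j * b i) k).natAbs, fun s α hα i =>
    mem_coordBox.2 fun k => ?_⟩
  have expand : α * b i = ∑ j, b.repr α j • (b j * b i) := by
    conv_lhs => rw [← b.sum_repr α, Finset.sum_mul]
    simp only [smul_mul_assoc]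
  calc |b.repr (α * b i) k| ≤ ∑ j, |b.repr α j| * |b.repr (b j * b i) k| := by
        rw [expand, map_sum, Finsupp.coe_finsetSum, Finset.sum_apply]
        simp only [map_smul, Finsupp.smul_apply, smul_eq_mul]
        exact (Finset.abs_sum_le_sum_abs _ _).trans_eq (Finset.sum_congr rfl fun _ _ => abs_mul _ _)
    _ ≤ ∑ j, s * ∑ k, |b.repr (b j * b i) k| := by
        gcongr with j _
        · exact mem_coordBox.1 hα j
        · exact Finset.single_le_sum (f := fun k => |b.repr (b j * b i) k|)
            (fun _ _ => abs_nonneg _) (Finset.mem_univ k)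
    _ ≤ ∑ i, ∑ j, s * ∑ k, |b.repr (b j * b i) k| :=
        Finset.single_le_sum (f := fun i => ∑ j, (s : ℤ) * ∑ k, |b.repr (b j * b i) k|)
          (fun _ _ => by positivity) (Finset.mem_univ i)
    _ = _ := by
        simp only [← Finset.mul_sum]
        push_cast
        ring

theorem exists_sub_algebraMap_eq_sum_smul_basis (z : K) :
    ∃ (β : 𝓞 K) (t : _ → ℚ), (∀ i, |t i| ≤ 1) ∧
      z - algebraMap (𝓞 K) K β = ∑ i, t i • algebraMap (𝓞 K) K (RingOfIntegers.basis K i) := by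
  let q := (integralBasis K).repr z
  refine ⟨∑ i, ⌊q i⌋ • RingOfIntegers.basis K i, fun i => Int.fract (q i), fun i => ?_, ?_⟩
  · rw [abs_of_nonneg (Int.fract_nonneg _)]
    exact (Int.fract_lt_one _).le
  · conv_lhs => rw [← (integralBasis K).sum_repr z]
    rw [map_sum, ← Finset.sum_sub_distrib]
    refine Finset.sum_congr rfl fun i _ => ?_
    change _ = Int.fract (q i) • _
    rw [integralBasis_apply, ← Int.self_sub_floor, sub_smul, map_zsmul, Int.cast_smul_eq_zsmul]

variable (K) in
theorem exists_coordBox_dvd_sub :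
    ∃ C : ℕ, ∀ (s : ℕ) (α : 𝓞 K), α ≠ 0 → α ∈ coordBox (RingOfIntegers.basis K) s →
      ∀ x, ∃ y ∈ coordBox (RingOfIntegers.basis K) (C * s), α ∣ x - y := by
  set b := RingOfIntegers.basis K
  obtain ⟨C, hC⟩ := exists_mul_mem_coordBox b
  refine ⟨Fintype.card (Module.Free.ChooseBasisIndex ℤ (𝓞 K)) * C, fun s α hα hαs x => ?_⟩
  have hα' : algebraMap (𝓞 K) K α ≠ 0 := by simpa using hα
  obtain ⟨β, t, ht, hβ⟩ := exists_sub_algebraMap_eq_sum_smul_basis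
    (algebraMap (𝓞 K) K x / algebraMap (𝓞 K) K α)
  refine ⟨x - α * β, mem_coordBox.2 fun k => ?_, by simp⟩
  have remainder_eq :
      algebraMap (𝓞 K) K (x - α * β) = ∑ i, t i • algebraMap (𝓞 K) K (α * b i) := by
    calc _ = algebraMap (𝓞 K) K α *
          (algebraMap (𝓞 K) K x / algebraMap (𝓞 K) K α - algebraMap (𝓞 K) K β) := by
          rw [mul_sub, mul_div_cancel₀ _ hα', map_sub, map_mul]
      _ = _ := by
          rw [hβ, Finset.mul_sum]
          simp only [mul_smul_comm, map_mul, b]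
  have coord_eq : (b.repr (x - α * β) k : ℚ) = ∑ i, t i * b.repr (α * b i) k := by
    have h := integralBasis_repr_apply K (x - α * β) k
    rw [remainder_eq, map_sum] at h
    simp only [map_smul, Finsupp.coe_finsetSum, Finset.sum_apply, Finsupp.smul_apply,
      integralBasis_repr_apply, smul_eq_mul, eq_intCast] at h
    exact h.symm
  have coord_le : |(b.repr (x - α * β) k : ℚ)| ≤ ∑ _i : Module.Free.ChooseBasisIndex ℤ (𝓞 K),
      1 * ((C * s : ℕ) : ℚ) := by
    rw [coord_eq]
    refine (Finset.abs_sum_le_sum_abs _ _).trans (Finset.sum_le_sum fun i _ => ?_)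
    rw [abs_mul]
    gcongr
    · exact ht i
    · exact_mod_cast mem_coordBox.1 (hC s α hαs i) k
  rw [Finset.sum_const, Finset.card_univ, nsmul_eq_mul, one_mul, ← Nat.cast_mul, ← mul_assoc]
    at coord_le
  exact_mod_cast coord_le

theorem finiteIndex_toAddSubgroup_of_ne_bot {I : Ideal (𝓞 K)} (hI : I ≠ ⊥) :
    (Submodule.toAddSubgroup I).FiniteIndex :=
  ⟨Ideal.absNorm_eq_zero_iff.not.2 hI⟩

variable (K) in
theorem exists_coordBox_covering :
    ∃ C : ℕ, ∀ I : Ideal (𝓞 K), I ≠ ⊥ → ∃ D : ℕ,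
      D ≤ C * (Ideal.absNorm I : ℝ) ^ (1 / Module.finrank ℤ (𝓞 K) : ℝ) ∧
        ∀ x, ∃ y ∈ coordBox (RingOfIntegers.basis K) D, x - y ∈ I := by
  obtain ⟨C, hC⟩ := exists_coordBox_dvd_sub K
  set d := Module.finrank ℤ (𝓞 K)
  have hd : d ≠ 0 := Module.finrank_pos.ne'
  refine ⟨C, fun I hI => ?_⟩
  have : (Submodule.toAddSubgroup I).FiniteIndex := finiteIndex_toAddSubgroup_of_ne_bot hI
  set s := Nat.nthRoot d (Ideal.absNorm I)
  obtain ⟨α, hαI, hα, hαs⟩ := exists_ne_zero_mem_coordBox_of_index_lt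
    (b := RingOfIntegers.basis K) (Submodule.toAddSubgroup I)
    (Nat.lt_pow_nthRoot_add_one hd (Ideal.absNorm I))
  refine ⟨C * s, ?_, fun x => ?_⟩
  · have s_pow_le : s ^ d ≤ Ideal.absNorm I := Nat.pow_nthRoot_le (Or.inl hd)
    rw [Nat.cast_mul, one_div]
    gcongr
    rw [Real.le_rpow_inv_iff_of_pos (by positivity) (by positivity) (by positivity)]
    exact_mod_cast s_pow_le
  · obtain ⟨y, hy, hαy⟩ := hC s α hα hαs x
    exact ⟨y, hy, I.mem_of_dvd hαy hαI⟩

theorem rpow_one_div_le_of_le_mul_pow {d : ℕ} (hd : d ≠ 0) {x B t : ℝ} (hx : 0 ≤ x) (hB : 0 ≤ B)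
    (ht : 0 ≤ t) (h : x ≤ B * t ^ d) : x ^ (1 / d : ℝ) ≤ B ^ (1 / d : ℝ) * t :=
  calc x ^ (1 / d : ℝ) ≤ (B * t ^ d) ^ (1 / d : ℝ) := by gcongr
    _ = B ^ (1 / d : ℝ) * t := by
      rw [Real.mul_rpow hB (by positivity), one_div, Real.pow_rpow_inv_natCast ht hd]

variable (K) in
open Classical in
theorem exists_abs_card_coordBox_filter_sub_le (B : ℕ) :
    ∃ C ≥ 0, ∀ I : Ideal (𝓞 K), I ≠ ⊥ → ∀ T : ℕ, 1 ≤ T →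
      Ideal.absNorm I ≤ B * T ^ Module.finrank ℤ (𝓞 K) → ∀ a : 𝓞 K,
      |({y ∈ coordBox (RingOfIntegers.basis K) T | a + y ∈ I}.card : ℝ) -
          (2 * (T : ℝ) + 1) ^ Module.finrank ℤ (𝓞 K) / Ideal.absNorm I| ≤
        C * (T : ℝ) ^ (Module.finrank ℤ (𝓞 K) - 1) *
          (Ideal.absNorm I : ℝ) ^ (1 / Module.finrank ℤ (𝓞 K) - 1 : ℝ) := by
  obtain ⟨C₀, hC₀⟩ := exists_coordBox_covering K
  set d := Module.finrank ℤ (𝓞 K)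
  have hd : d ≠ 0 := Module.finrank_pos.ne'
  refine ⟨2 * C₀ * d * (3 + 2 * (C₀ * B ^ (1 / d : ℝ))) ^ (d - 1), by positivity,
    fun I hI T hT hIT a => ?_⟩
  obtain ⟨D, hD, covering⟩ := hC₀ I hI
  set N := Ideal.absNorm I
  have hN_pos : (0 : ℝ) < N :=
    Nat.cast_pos.2 (Nat.pos_of_ne_zero (Ideal.absNorm_eq_zero_iff.not.2 hI))
  have : (Submodule.toAddSubgroup I).FiniteIndex := finiteIndex_toAddSubgroup_of_ne_bot hI
  have index_bound := abs_index_mul_card_filter_add_mem_sub_le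
    (H := Submodule.toAddSubgroup I) covering T a
  rw [show (Submodule.toAddSubgroup I).index = N from rfl] at index_bound
  have D_le : (D : ℝ) ≤ C₀ * B ^ (1 / d : ℝ) * T := by
    have : (N : ℝ) ^ (1 / d : ℝ) ≤ B ^ (1 / d : ℝ) * T :=
      rpow_one_div_le_of_le_mul_pow hd N.cast_nonneg B.cast_nonneg T.cast_nonneg (mod_cast hIT)
    calc (D : ℝ) ≤ C₀ * (N : ℝ) ^ (1 / d : ℝ) := hD
      _ ≤ C₀ * (B ^ (1 / d : ℝ) * T) := by gcongr
      _ = _ := (mul_assoc _ _ _).symm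
  have side_le : 2 * ((T : ℝ) + D) + 1 ≤ (3 + 2 * (C₀ * B ^ (1 / d : ℝ))) * T := by
    have : (1 : ℝ) ≤ T := mod_cast hT
    linarith
  calc _ = |N * ({y ∈ coordBox (RingOfIntegers.basis K) T | a + y ∈ I}.card : ℝ) -
        (2 * (T : ℝ) + 1) ^ d| / N := by
        rw [← abs_of_pos hN_pos, ← abs_div, abs_of_pos hN_pos, sub_div,
          mul_div_cancel_left₀ _ hN_pos.ne']
    _ ≤ 2 * D * d * (2 * ((T : ℝ) + D) + 1) ^ (d - 1) / N := by gcongr; exact index_bound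
    _ ≤ 2 * (C₀ * (N : ℝ) ^ (1 / d : ℝ)) * d *
          ((3 + 2 * (C₀ * B ^ (1 / d : ℝ))) * T) ^ (d - 1) / N := by gcongr
    _ = _ := by rw [Real.rpow_sub_one hN_pos.ne', mul_pow]; ring

end IntegerBoxes

section Mertens

variable {K : Type*} [Field K] [NumberField K]

theorem absNorm_span_singleton_eq_prod_norm_embedding (α : 𝓞 K) :
    (Ideal.absNorm (Ideal.span {α}) : ℝ) =
      ∏ σ : K →ₐ[ℚ] ℂ, ‖σ (algebraMap (𝓞 K) K α)‖ := by
  rw [← norm_prod, ← Algebra.norm_eq_prod_embeddings, Ideal.absNorm_span_singleton,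
    ← Algebra.coe_norm_int, Nat.cast_natAbs]
  simp

theorem finrank_int_eq_card_embeddings :
    Module.finrank ℤ (𝓞 K) = (Finset.univ : Finset (K →ₐ[ℚ] ℂ)).card := by
  rw [RingOfIntegers.rank, Finset.card_univ, AlgHom.card]

theorem absNorm_span_intCast_add_le (a : ℤ) (α : 𝓞 K) :
    (Ideal.absNorm (Ideal.span {(a : 𝓞 K) + α}) : ℝ) ≤
      (|(a : ℝ)| + house (algebraMap (𝓞 K) K α)) ^ Module.finrank ℤ (𝓞 K) := by
  rw [absNorm_span_singleton_eq_prod_norm_embedding, finrank_int_eq_card_embeddings,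
    ← Finset.prod_const]
  refine Finset.prod_le_prod (fun _ _ => norm_nonneg _) fun σ _ => ?_
  rw [map_add, map_add, map_intCast, map_intCast, ← Complex.norm_intCast]
  grw [norm_add_le, ← norm_embedding_le_house _ (σ : K →+* ℂ)]
  rfl

theorem le_absNorm_span_intCast_add {a : ℤ} {α : 𝓞 K}
    (h : house (algebraMap (𝓞 K) K α) ≤ |(a : ℝ)|) :
    (|(a : ℝ)| - house (algebraMap (𝓞 K) K α)) ^ Module.finrank ℤ (𝓞 K) ≤
      Ideal.absNorm (Ideal.span {(a : 𝓞 K) + α}) := by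
  rw [absNorm_span_singleton_eq_prod_norm_embedding, finrank_int_eq_card_embeddings,
    ← Finset.prod_const]
  refine Finset.prod_le_prod (fun _ _ => sub_nonneg.2 h) fun σ _ => ?_
  rw [map_add, map_add, map_intCast, map_intCast, ← Complex.norm_intCast]
  grw [← norm_sub_le_norm_add, ← norm_embedding_le_house _ (σ : K →+* ℂ)]
  rfl

variable (K) in
theorem exists_house_le_of_mem_coordBox :
    ∃ C : ℕ, ∀ (T : ℕ), ∀ y ∈ coordBox (RingOfIntegers.basis K) T,
      house (algebraMap (𝓞 K) K y) ≤ C * T := by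
  set b := RingOfIntegers.basis K
  obtain ⟨C, hC⟩ := exists_nat_ge (∑ i, house (algebraMap (𝓞 K) K (b i)))
  refine ⟨C, fun T y hy => ?_⟩
  calc house (algebraMap (𝓞 K) K y)
      = house (∑ i, (b.repr y i : K) * algebraMap (𝓞 K) K (b i)) := by
        conv_lhs => rw [← b.sum_repr y]
        simp only [map_sum, zsmul_eq_mul, map_mul, map_intCast]
    _ ≤ ∑ i, house ((b.repr y i : K) * algebraMap (𝓞 K) K (b i)) := house_sum_le_sum_house _ _
    _ ≤ ∑ i, T * house (algebraMap (𝓞 K) K (b i)) := by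
        gcongr with i _
        grw [house_mul_le, house_intCast]
        gcongr
        · exact house_nonneg _
        · exact_mod_cast mem_coordBox.1 hy i
    _ = (∑ i, house (algebraMap (𝓞 K) K (b i))) * T := by rw [← Finset.mul_sum, mul_comm]
    _ ≤ C * T := by gcongr

variable (K) in
theorem exists_shift_absNorm_bounds :
    ∃ M B : ℕ, 1 ≤ B ∧ ∀ T : ℕ, ∀ y ∈ coordBox (RingOfIntegers.basis K) T,
      T ^ Module.finrank ℤ (𝓞 K) ≤ Ideal.absNorm (Ideal.span {((M * T : ℕ) : 𝓞 K) + y}) ∧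
        Ideal.absNorm (Ideal.span {((M * T : ℕ) : 𝓞 K) + y}) ≤
          B * T ^ Module.finrank ℤ (𝓞 K) := by
  obtain ⟨C, hC⟩ := exists_house_le_of_mem_coordBox K
  refine ⟨C + 1, (2 * C + 1) ^ Module.finrank ℤ (𝓞 K), Nat.one_le_pow _ _ (by omega),
    fun T y hy => ?_⟩
  have house_le := hC T y hy
  have abs_shift : |((((C + 1) * T : ℕ) : ℤ) : ℝ)| = C * T + T := by
    rw [Int.cast_natCast, abs_of_nonneg (Nat.cast_nonneg _)]; push_cast; ring
  have lower := le_absNorm_span_intCast_add (a := ((C + 1) * T : ℕ)) (α := y)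
    (by rw [abs_shift]; linarith [T.cast_nonneg (α := ℝ)])
  have upper := absNorm_span_intCast_add_le (((C + 1) * T : ℕ) : ℤ) y
  rw [abs_shift, Int.cast_natCast] at lower upper
  constructor
  · have : (T : ℝ) ^ Module.finrank ℤ (𝓞 K) ≤ _ :=
      (pow_le_pow_left₀ T.cast_nonneg (by linarith) _).trans lower
    exact_mod_cast this
  · have : (_ : ℝ) ≤ ((2 * C + 1) * T) ^ Module.finrank ℤ (𝓞 K) := upper.trans
      (pow_le_pow_left₀ (add_nonneg (by positivity) (house_nonneg _)) (by linarith) _)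
    rw [← mul_pow]
    exact_mod_cast this

variable (K) in
/-- The sum `∑ log N(P) / N(P)` over the nonzero prime ideals `P` with `N(P) ≤ x`, the subject of
Mertens' first theorem for `K`. -/
noncomputable def mertensSum (x : ℕ) : ℝ :=
  ∑ P ∈ primesLE K x, Real.log (Ideal.absNorm P) / Ideal.absNorm P

theorem mertensSum_nonneg (x : ℕ) : 0 ≤ mertensSum K x :=
  Finset.sum_nonneg fun _ _ => div_nonneg (Real.log_natCast_nonneg _) (Nat.cast_nonneg _)

theorem mertensSum_mono : Monotone (mertensSum K) := fun _ _ hxy =>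
  Finset.sum_le_sum_of_subset_of_nonneg (primesLE_mono hxy)
    fun _ _ _ => div_nonneg (Real.log_natCast_nonneg _) (Nat.cast_nonneg _)

theorem mertensSum_eq_sum_primePowersLE (x : ℕ) :
    mertensSum K x = ∑ q ∈ primePowersLE K x with q.2 = 1,
      Real.log (Ideal.absNorm q.1) * ((Ideal.absNorm q.1 ^ q.2 : ℕ) : ℝ)⁻¹ := by
  refine Finset.sum_nbij' (fun P => (P, 1)) Prod.fst (fun P hP => ?_) (fun q hq => ?_)
    (fun _ _ => rfl) (fun q hq => ?_) (fun P _ => ?_)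
  · simpa [mem_primePowersLE] using mem_primesLE.1 hP
  · obtain ⟨hq, h1⟩ := Finset.mem_filter.1 hq
    obtain ⟨hP, -, hx⟩ := mem_primePowersLE.1 hq
    rw [h1, pow_one] at hx
    exact mem_primesLE.2 ⟨hP, hx⟩
  · exact Prod.ext rfl (Finset.mem_filter.1 hq).2.symm
  · rw [pow_one, div_eq_mul_inv]

variable (K) in
theorem exists_abs_sum_primePowersLE_sub_mertensSum_le :
    ∃ C ≥ 0, ∀ x : ℕ, |∑ q ∈ primePowersLE K x,
      Real.log (Ideal.absNorm q.1) * ((Ideal.absNorm q.1 ^ q.2 : ℕ) : ℝ)⁻¹ - mertensSum K x| ≤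
        C := by
  obtain ⟨C, hC, h⟩ := exists_sum_primePowersLE_not_prime_le K
  refine ⟨C, hC, fun x => ?_⟩
  have log_nonneg (q : Ideal (𝓞 K) × ℕ) : 0 ≤ Real.log (Ideal.absNorm q.1) :=
    Real.log_natCast_nonneg _
  rw [mertensSum_eq_sum_primePowersLE, ← Finset.sum_filter_add_sum_filter_not _ (fun q => q.2 = 1),
    add_sub_cancel_left, abs_of_nonneg (Finset.sum_nonneg fun q _ =>
      mul_nonneg (log_nonneg q) (by positivity)), Finset.sum_filter]
  refine (Finset.sum_le_sum fun q _ => ?_).trans (h x)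
  have := log_nonneg q
  by_cases hq : q.2 = 1
  · simp only [hq, not_true_eq_false, if_false]
    positivity
  · rw [if_pos hq, if_neg (Nat.Prime.not_prime_pow' hq)]

variable (K) in
theorem exists_sum_primePowersLE_log_mul_rpow_le {s : ℝ} (hs : 0 < s) (hs1 : s ≤ 1) :
    ∃ C ≥ 0, ∀ x : ℕ, ∑ q ∈ primePowersLE K x, Real.log (Ideal.absNorm q.1) *
      ((Ideal.absNorm q.1 ^ q.2 : ℕ) : ℝ) ^ (s - 1) ≤ C * x ^ s := by
  obtain ⟨C, hC, h⟩ := exists_sum_vonMangoldt_mul_rpow_le hs hs1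
  refine ⟨Module.finrank ℤ (𝓞 K) * C, by positivity, fun x => ?_⟩
  calc _ ≤ _ := sum_primePowersLE_le_sum_vonMangoldt (g := fun n => (n : ℝ) ^ (s - 1))
        (fun _ => by positivity) x
    _ ≤ Module.finrank ℤ (𝓞 K) * (C * x ^ s) := by gcongr; exact h x
    _ = _ := (mul_assoc _ _ _).symm

open Classical in
variable (K) in
theorem exists_sum_log_mul_abs_card_coordBox_filter_sub_le (B : ℕ) :
    ∃ C ≥ 0, ∀ T : ℕ, 1 ≤ T → ∀ a : 𝓞 K,
      ∑ q ∈ primePowersLE K (B * T ^ Module.finrank ℤ (𝓞 K)), Real.log (Ideal.absNorm q.1) *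
        |({y ∈ coordBox (RingOfIntegers.basis K) T | a + y ∈ q.1 ^ q.2}.card : ℝ) -
          (2 * (T : ℝ) + 1) ^ Module.finrank ℤ (𝓞 K) / (Ideal.absNorm q.1 ^ q.2 : ℕ)| ≤
      C * (T : ℝ) ^ Module.finrank ℤ (𝓞 K) := by
  obtain ⟨C₁, hC₁, count_le⟩ := exists_abs_card_coordBox_filter_sub_le K B
  set d := Module.finrank ℤ (𝓞 K)
  have hd : 0 < d := Module.finrank_pos
  have one_div_le : 1 / (d : ℝ) ≤ 1 := div_le_one_of_le₀ (mod_cast hd) d.cast_nonneg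
  obtain ⟨C₂, hC₂, sum_le⟩ := exists_sum_primePowersLE_log_mul_rpow_le K
    (s := 1 / d) (by positivity) one_div_le
  refine ⟨C₁ * C₂ * B ^ (1 / d : ℝ), by positivity, fun T hT a => ?_⟩
  calc _ ≤ ∑ q ∈ primePowersLE K (B * T ^ d), C₁ * (T : ℝ) ^ (d - 1) *
        (Real.log (Ideal.absNorm q.1) *
          ((Ideal.absNorm q.1 ^ q.2 : ℕ) : ℝ) ^ (1 / d - 1 : ℝ)) := by
        refine Finset.sum_le_sum fun q hq => ?_
        obtain ⟨hP, -, hx⟩ := mem_primePowersLE.1 hq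
        have count_pow_le := count_le (q.1 ^ q.2) (pow_ne_zero _ hP.ne_zero) T hT
          (by rwa [map_pow]) a
        rw [map_pow] at count_pow_le
        rw [mul_left_comm]
        exact mul_le_mul_of_nonneg_left count_pow_le (Real.log_natCast_nonneg _)
    _ ≤ C₁ * (T : ℝ) ^ (d - 1) * (C₂ * ((B * T ^ d : ℕ) : ℝ) ^ (1 / d : ℝ)) := by
        rw [← Finset.mul_sum]
        gcongr
        exact sum_le _
    _ ≤ C₁ * (T : ℝ) ^ (d - 1) * (C₂ * (B ^ (1 / d : ℝ) * T)) := by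
        gcongr
        exact rpow_one_div_le_of_le_mul_pow hd.ne' (Nat.cast_nonneg _) B.cast_nonneg
          T.cast_nonneg (by push_cast; rfl)
    _ = C₁ * C₂ * B ^ (1 / d : ℝ) * (T : ℝ) ^ d := by
        rw [← Nat.sub_one_add_one hd.ne', pow_succ, Nat.add_sub_cancel]
        ring

variable (K) in
theorem exists_abs_sum_log_absNorm_sub_le (B : ℕ) :
    ∃ C ≥ 0, ∀ T : ℕ, 1 ≤ T → ∀ a : 𝓞 K,
      (∀ y ∈ coordBox (RingOfIntegers.basis K) T, Ideal.span {a + y} ≠ ⊥ ∧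
        Ideal.absNorm (Ideal.span {a + y}) ≤ B * T ^ Module.finrank ℤ (𝓞 K)) →
      |∑ y ∈ coordBox (RingOfIntegers.basis K) T, Real.log (Ideal.absNorm (Ideal.span {a + y})) -
        (2 * (T : ℝ) + 1) ^ Module.finrank ℤ (𝓞 K) *
          ∑ q ∈ primePowersLE K (B * T ^ Module.finrank ℤ (𝓞 K)),
            Real.log (Ideal.absNorm q.1) * ((Ideal.absNorm q.1 ^ q.2 : ℕ) : ℝ)⁻¹| ≤
      C * (T : ℝ) ^ Module.finrank ℤ (𝓞 K) := by
  classical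
  obtain ⟨C, hC, h⟩ := exists_sum_log_mul_abs_card_coordBox_filter_sub_le K B
  refine ⟨C, hC, fun T hT a ha => (?_ : _ ≤ _).trans (h T hT a)⟩
  rw [sum_log_absNorm_eq_sum_primePowersLE _ _ (fun y hy => (ha y hy).1) (fun y hy => (ha y hy).2),
    Finset.mul_sum, ← Finset.sum_sub_distrib]
  refine (Finset.abs_sum_le_sum_abs _ _).trans (Finset.sum_le_sum fun q _ => ?_)
  simp only [Ideal.dvd_span_singleton]
  rw [mul_left_comm, ← mul_sub, abs_mul, abs_of_nonneg (Real.log_natCast_nonneg _), div_eq_mul_inv]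

variable (K) in
theorem exists_shift_abs_sum_log_absNorm_sub_le :
    ∃ M B : ℕ, 1 ≤ B ∧ ∀ T : ℕ, 1 ≤ T →
      (∀ y ∈ coordBox (RingOfIntegers.basis K) T, Ideal.span {((M * T : ℕ) : 𝓞 K) + y} ≠ ⊥ ∧
        Ideal.absNorm (Ideal.span {((M * T : ℕ) : 𝓞 K) + y}) ≤
          B * T ^ Module.finrank ℤ (𝓞 K)) ∧
      |∑ y ∈ coordBox (RingOfIntegers.basis K) T,
          Real.log (Ideal.absNorm (Ideal.span {((M * T : ℕ) : 𝓞 K) + y})) -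
        (2 * (T : ℝ) + 1) ^ Module.finrank ℤ (𝓞 K) * (Module.finrank ℤ (𝓞 K) * Real.log T)| ≤
      (2 * (T : ℝ) + 1) ^ Module.finrank ℤ (𝓞 K) * Real.log B := by
  obtain ⟨M, B, hB, norm_bounds⟩ := exists_shift_absNorm_bounds K
  set d := Module.finrank ℤ (𝓞 K)
  refine ⟨M, B, hB, fun T hT => ⟨fun y hy => ⟨fun h => ?_, (norm_bounds T y hy).2⟩, ?_⟩⟩
  · have pow_le := (norm_bounds T y hy).1
    rw [h, Ideal.absNorm_bot] at pow_le
    exact (pow_pos hT d).not_ge pow_le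
  have card_eq : ((coordBox (RingOfIntegers.basis K) T).card : ℝ) = (2 * (T : ℝ) + 1) ^ d := by
    rw [card_coordBox]; push_cast; rfl
  rw [← card_eq, ← nsmul_eq_mul _ (d * Real.log T : ℝ), ← nsmul_eq_mul _ (Real.log B),
    ← Finset.sum_const, ← Finset.sum_sub_distrib]
  refine (Finset.abs_sum_le_sum_abs _ _).trans (Finset.sum_le_card_nsmul _ _ _ fun y hy => ?_)
  obtain ⟨pow_le, le_mul_pow⟩ := norm_bounds T y hy
  have absNorm_pos := (pow_pos hT d).trans_le pow_le
  rw [← Real.log_pow, abs_of_nonneg (sub_nonneg.2 (Real.log_le_log (by positivity)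
    (mod_cast pow_le))), sub_le_iff_le_add, ← Real.log_mul (by positivity) (by positivity)]
  exact Real.log_le_log (mod_cast absNorm_pos) (mod_cast le_mul_pow)

variable (K) in
theorem exists_abs_mertensSum_mul_pow_sub_le :
    ∃ B : ℕ, 1 ≤ B ∧ ∃ C ≥ 0, ∀ T : ℕ, 1 ≤ T →
      |mertensSum K (B * T ^ Module.finrank ℤ (𝓞 K)) -
        Module.finrank ℤ (𝓞 K) * Real.log T| ≤ C := by
  obtain ⟨M, B, hB, shift_bounds⟩ := exists_shift_abs_sum_log_absNorm_sub_le K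
  obtain ⟨C₁, hC₁, average_sub_le⟩ := exists_abs_sum_log_absNorm_sub_le K B
  obtain ⟨C₂, hC₂, sub_mertensSum_le⟩ := exists_abs_sum_primePowersLE_sub_mertensSum_le K
  set d := Module.finrank ℤ (𝓞 K)
  have := Real.log_natCast_nonneg B
  refine ⟨B, hB, Real.log B + C₁ + C₂, by positivity, fun T hT => ?_⟩
  obtain ⟨norm_bounds, sum_log_sub_le⟩ := shift_bounds T hT
  have average_sub_le := average_sub_le T hT _ norm_bounds
  have sub_mertensSum_le := sub_mertensSum_le (B * T ^ d)
  set V : ℝ := (2 * (T : ℝ) + 1) ^ d with hV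
  have hV_pos : 0 < V := by positivity
  have pow_le_V : C₁ * (T : ℝ) ^ d ≤ C₁ * V := by
    rw [hV]; gcongr; linarith [T.cast_nonneg (α := ℝ)]
  set Z := ∑ q ∈ primePowersLE K (B * T ^ d),
    Real.log (Ideal.absNorm q.1) * ((Ideal.absNorm q.1 ^ q.2 : ℕ) : ℝ)⁻¹
  have Z_sub_le : |Z - d * Real.log T| ≤ Real.log B + C₁ := by
    rw [abs_le] at average_sub_le sum_log_sub_le ⊢
    constructor <;> refine le_of_mul_le_mul_left ?_ hV_pos <;> linarith
  rw [abs_le] at *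
  constructor <;> linarith

theorem exists_mul_pow_le_and_le_mul_pow {d B x : ℕ} (hd : d ≠ 0) (hB : 1 ≤ B) (hBx : B ≤ x) :
    ∃ T, 1 ≤ T ∧ B * T ^ d ≤ x ∧ x ≤ B * (T + 1) ^ d := by
  have lt_pow := Nat.lt_pow_nthRoot_add_one hd (x / B)
  refine ⟨Nat.nthRoot d (x / B), Nat.one_le_iff_ne_zero.2 fun h => ?_, ?_, ?_⟩
  · rw [h, zero_add, one_pow, Nat.lt_one_iff] at lt_pow
    exact (Nat.div_pos hBx hB).ne' lt_pow
  · exact (Nat.mul_le_mul_left _ (Nat.pow_nthRoot_le (Or.inl hd))).trans (Nat.mul_div_le x B)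
  · rw [Nat.div_lt_iff_lt_mul hB, mul_comm] at lt_pow
    exact lt_pow.le

variable (K) in
theorem exists_abs_mertensSum_sub_log_le :
    ∃ C, ∀ x : ℕ, 1 ≤ x → |mertensSum K x - Real.log x| ≤ C := by
  obtain ⟨B, hB, C, hC, h⟩ := exists_abs_mertensSum_mul_pow_sub_le K
  set d := Module.finrank ℤ (𝓞 K)
  have hd : d ≠ 0 := Module.finrank_pos.ne'
  have log_B_nonneg : 0 ≤ Real.log B := Real.log_natCast_nonneg B
  have d_log_two_nonneg : 0 ≤ d * Real.log 2 := by positivity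
  have log_mul_pow {T : ℕ} (hT : 1 ≤ T) :
      Real.log ((B * T ^ d : ℕ) : ℝ) = Real.log B + d * Real.log T := by
    rw [Nat.cast_mul, Nat.cast_pow, Real.log_mul (by positivity) (by positivity), Real.log_pow]
  refine ⟨C + Real.log B + d * Real.log 2, fun x hx => ?_⟩
  have mono_log {m n : ℕ} (hm : 1 ≤ m) (hmn : m ≤ n) : Real.log m ≤ Real.log n :=
    Real.log_le_log (mod_cast hm) (mod_cast hmn)
  rcases lt_or_ge x B with hxB | hBx
  · have at_B := h 1 le_rfl
    simp only [one_pow, mul_one, Nat.cast_one, Real.log_one, mul_zero, sub_zero] at at_B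
    rw [abs_le] at *
    constructor <;> linarith [mertensSum_mono (K := K) hxB.le, mertensSum_nonneg (K := K) x,
      mono_log hx hxB.le, Real.log_natCast_nonneg x]
  · obtain ⟨T, hT, le_T, T_succ_le⟩ := exists_mul_pow_le_and_le_mul_pow hd hB hBx
    have log_T_succ_le : d * Real.log ((T + 1 : ℕ) : ℝ) ≤ d * Real.log T + d * Real.log 2 := by
      rw [← mul_add, ← Real.log_mul (by positivity) two_ne_zero]
      gcongr
      have : (1 : ℝ) ≤ T := mod_cast hT
      push_cast
      linarith
    have lower := h T hT
    have upper := h (T + 1) (by omega)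
    have log_lower := mono_log (Nat.one_le_iff_ne_zero.2 (by positivity)) le_T
    have log_upper := mono_log hx T_succ_le
    rw [log_mul_pow hT] at log_lower
    rw [log_mul_pow (by omega)] at log_upper
    rw [abs_le] at *
    constructor <;> linarith [mertensSum_mono (K := K) le_T, mertensSum_mono (K := K) T_succ_le]

end Mertens

section ResidueFields

open UniqueFactorizationMonoid (normalizedFactors)

theorem surjective_intCast_quotient_of_not_conductor_le {R : Type*} [CommRing R] {P : Ideal R}
    [P.IsMaximal] {r : R} {n : ℤ} (hn : (n : R) - r ∈ P) (hP : ¬ conductor ℤ r ≤ P) :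
    Function.Surjective (Int.cast : ℤ → R ⧸ P) := by
  let : Field (R ⧸ P) := Ideal.Quotient.field P
  have adjoin_le : Algebra.adjoin ℤ {r} ≤
      (⊥ : Subalgebra ℤ (R ⧸ P)).comap (Ideal.Quotient.mkₐ ℤ P) := by
    refine Algebra.adjoin_singleton_le (Algebra.mem_bot.2 ⟨n, ?_⟩)
    simpa using Ideal.Quotient.eq.2 hn
  obtain ⟨c, hc, hcP⟩ := Set.not_subset.1 hP
  have mk_c_ne_zero : Ideal.Quotient.mk P c ≠ 0 := fun h => hcP (Ideal.Quotient.eq_zero_iff_mem.1 h)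
  intro x
  obtain ⟨y, hy⟩ := Ideal.Quotient.mk_surjective ((Ideal.Quotient.mk P c)⁻¹ * x)
  obtain ⟨a, ha⟩ := Algebra.mem_bot.1 (adjoin_le (mem_conductor_iff.1 hc y))
  refine ⟨a, ?_⟩
  calc (a : R ⧸ P) = Ideal.Quotient.mk P c * Ideal.Quotient.mk P y := by simpa using ha
    _ = x := by rw [hy, mul_inv_cancel_left₀ mk_c_ne_zero]

variable {K : Type*} [Field K] [NumberField K]

theorem absNorm_prime_iff_surjective_intCast {P : Ideal (𝓞 K)} (hP : Prime P) :
    (Ideal.absNorm P).Prime ↔ Function.Surjective (Int.cast : ℤ → 𝓞 K ⧸ P) := by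
  have : Finite (𝓞 K ⧸ P) := P.finiteQuotientOfFreeOfNeBot hP.ne_zero
  constructor
  · intro hN
    have := Fintype.ofFinite (𝓞 K ⧸ P)
    let e := ZMod.ringEquivOfPrime (𝓞 K ⧸ P) hN (Nat.card_eq_fintype_card.symm)
    intro x
    obtain ⟨z, rfl⟩ := e.surjective x
    obtain ⟨a, rfl⟩ := ZMod.intCast_surjective z
    exact ⟨a, (map_intCast e a).symm⟩
  · intro hsurj
    obtain ⟨p, n, hp, hn, hpP, hN⟩ := exists_prime_mem_absNorm_eq_pow hP
    have : NeZero p := ⟨hp.ne_zero⟩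
    let φ : ZMod p →+ 𝓞 K ⧸ P := ZMod.lift p
      ⟨Int.castAddHom (𝓞 K ⧸ P), by simpa using Ideal.Quotient.eq_zero_iff_mem.2 hpP⟩
    have φ_surj : Function.Surjective φ := fun x =>
      (hsurj x).imp' _ fun a ha => (ZMod.lift_coe p _ a).trans ha
    have pow_le : p ^ n ≤ p ^ 1 := by
      rw [← hN, pow_one]
      exact (Nat.card_le_card_of_surjective φ φ_surj).trans_eq (Nat.card_zmod p)
    have n_le_one : n ≤ 1 := (Nat.pow_le_pow_iff_right hp.one_lt).1 pow_le
    rwa [hN, le_antisymm n_le_one (Nat.one_le_iff_ne_zero.2 hn), pow_one]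

theorem exists_intCast_sub_mem_of_absNorm_prime {P : Ideal (𝓞 K)} (hP : (Ideal.absNorm P).Prime)
    (r : 𝓞 K) : ∃ a : ℤ, (a : 𝓞 K) - r ∈ P := by
  obtain ⟨a, ha⟩ := (absNorm_prime_iff_surjective_intCast (prime_of_absNorm_prime hP)).1 hP
    (Ideal.Quotient.mk P r)
  exact ⟨a, Ideal.Quotient.eq.1 (by simpa using ha)⟩

theorem not_sq_dvd_span_natCast_of_not_dvd_differentIdeal {P : Ideal (𝓞 K)} {p : ℕ}
    (hp : p.Prime) (hP : ¬ P ∣ differentIdeal ℤ (𝓞 K)) : ¬ P ^ 2 ∣ Ideal.span {(p : 𝓞 K)} := by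
  have span_ne_bot : Ideal.span {(p : ℤ)} ≠ ⊥ := by simpa using hp.ne_zero
  have : (Ideal.span {(p : ℤ)}).IsMaximal := ((Ideal.span_singleton_prime (mod_cast hp.ne_zero)).2
    (Nat.prime_iff_prime_int.1 hp)).isMaximal span_ne_bot
  intro h
  refine hP ?_
  simpa using pow_sub_one_dvd_differentIdeal ℤ P 2 span_ne_bot
    (by simpa [Ideal.map_span] using h)

theorem natCast_dvd_of_intCast_mem {R : Type*} [CommRing R] {P : Ideal R} (hP : P ≠ ⊤) {p : ℕ}
    (hp : p.Prime) (hpP : (p : R) ∈ P) {z : ℤ} (hz : (z : R) ∈ P) : (p : ℤ) ∣ z := by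
  by_contra hpz
  obtain ⟨a, b, hab⟩ := ((Nat.prime_iff_prime_int.1 hp).coprime_iff_not_dvd).2 hpz
  refine hP ((Ideal.eq_top_iff_one P).2 ?_)
  have one_eq : (a : R) * p + b * z = 1 := mod_cast congrArg (Int.cast : ℤ → R) hab
  exact one_eq ▸ P.add_mem (P.mul_mem_left _ hpP) (P.mul_mem_left _ hz)

theorem natCast_pow_dvd_of_intCast_mem_pow {R : Type*} [CommRing R] [IsDedekindDomain R]
    {P : Ideal R} (hP : Prime P) {p : ℕ} (hp : p.Prime) (hpP : (p : R) ∈ P)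
    (hpP2 : ¬ P ^ 2 ∣ Ideal.span {(p : R)}) {k : ℕ} {z : ℤ} (hz : (z : R) ∈ P ^ k) :
    (p : ℤ) ^ k ∣ z := by
  obtain ⟨I, hI⟩ := Ideal.dvd_span_singleton.2 hpP
  have hPI : ¬ P ∣ I := fun h => hpP2 (by rw [hI, sq]; exact mul_dvd_mul_left P h)
  induction k generalizing z with
  | zero => simp
  | succ k ih =>
    obtain ⟨w, rfl⟩ := natCast_dvd_of_intCast_mem (Ideal.isPrime_of_prime hP).ne_top hp hpP
      (Ideal.pow_le_self k.succ_ne_zero hz)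
    have span_eq : Ideal.span {(((p : ℤ) * w : ℤ) : R)} = P * (I * Ideal.span {(w : R)}) := by
      rw [← mul_assoc, ← hI, Ideal.span_singleton_mul_span_singleton, Int.cast_mul,
        Int.cast_natCast]
    have pow_dvd := Ideal.dvd_span_singleton.2 hz
    rw [span_eq, pow_succ', mul_dvd_mul_iff_left hP.ne_zero] at pow_dvd
    rw [pow_succ']
    exact mul_dvd_mul_left _ (ih (Ideal.dvd_span_singleton.1
      (hP.pow_dvd_of_dvd_mul_left k hPI pow_dvd)))

theorem aeval_derivative_minpoly_int_ne_zero (r : 𝓞 K) :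
    aeval r (derivative (minpoly ℤ r)) ≠ 0 := by
  have hr : IsIntegral ℤ r := IsIntegralClosure.isIntegral ℤ K r
  have degree_pos := minpoly.natDegree_pos hr
  intro h
  have derivative_ne_zero : derivative (minpoly ℤ r) ≠ 0 := fun h0 =>
    degree_pos.ne' (derivative_eq_zero.1 h0)
  exact (natDegree_le_of_dvd (minpoly.isIntegrallyClosed_dvd hr h) derivative_ne_zero).not_gt
    (natDegree_derivative_lt degree_pos.ne')

/-- The nonzero primes at which `𝓞 K` differs from `ℤ[r]` or is ramified over `ℤ`; if `K = ℚ(r)`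
these are the divisors of `f'(r)`, where `f` is the minimal polynomial of `r`. -/
def exceptionalPrimes (r : 𝓞 K) : Set (Ideal (𝓞 K)) :=
  {P | Prime P ∧ (conductor ℤ r ≤ P ∨ P ∣ differentIdeal ℤ (𝓞 K))}

theorem finite_exceptionalPrimes {r : 𝓞 K}
    (hgen : Algebra.adjoin ℚ {algebraMap (𝓞 K) K r} = ⊤) : (exceptionalPrimes r).Finite := by
  classical
  set F := Ideal.span {aeval r (derivative (minpoly ℤ r))} with hF
  have F_ne_bot : F ≠ ⊥ := by
    rw [hF, Ne, Ideal.span_singleton_eq_bot]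
    exact aeval_derivative_minpoly_int_ne_zero r
  have conductor_mul : conductor ℤ r * differentIdeal ℤ (𝓞 K) = F :=
    conductor_mul_differentIdeal ℤ ℚ K r hgen
  refine (normalizedFactors F).toFinset.finite_toSet.subset fun P ⟨hP, h⟩ => ?_
  rw [Finset.mem_coe, Multiset.mem_toFinset, Ideal.mem_normalizedFactors_iff F_ne_bot,
    ← Ideal.dvd_iff_le, ← conductor_mul]
  refine ⟨Ideal.isPrime_of_prime hP, ?_⟩
  rcases h with h | h
  · exact dvd_mul_of_dvd_left (Ideal.dvd_iff_le.2 h) _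
  · exact dvd_mul_of_dvd_right h _

theorem absNorm_prime_of_intCast_sub_mem {P : Ideal (𝓞 K)} (hP : Prime P) {r : 𝓞 K}
    (hr : P ∉ exceptionalPrimes r) {n : ℤ} (hn : (n : 𝓞 K) - r ∈ P) : (Ideal.absNorm P).Prime := by
  have : P.IsMaximal := (Ideal.isPrime_of_prime hP).isMaximal hP.ne_zero
  exact (absNorm_prime_iff_surjective_intCast hP).2
    (surjective_intCast_quotient_of_not_conductor_le hn fun h => hr ⟨hP, Or.inl h⟩)

theorem absNorm_pow_le_abs_of_intCast_mem_pow {P : Ideal (𝓞 K)} (hN : (Ideal.absNorm P).Prime)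
    {r : 𝓞 K} (hr : P ∉ exceptionalPrimes r) {k : ℕ} {z : ℤ} (hz0 : z ≠ 0)
    (hz : (z : 𝓞 K) ∈ P ^ k) : (Ideal.absNorm P : ℝ) ^ k ≤ |(z : ℝ)| := by
  have hP := prime_of_absNorm_prime hN
  have not_sq_dvd := not_sq_dvd_span_natCast_of_not_dvd_differentIdeal hN fun h =>
    hr ⟨hP, Or.inr h⟩
  have pow_dvd := natCast_pow_dvd_of_intCast_mem_pow hP hN (Ideal.absNorm_mem P) not_sq_dvd hz
  exact_mod_cast Int.le_of_dvd (abs_pos.2 hz0) ((dvd_abs _ _).2 pow_dvd)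

theorem rpow_one_div_finrank_pow_le_abs_of_intCast_mem_pow {I : Ideal (𝓞 K)} {k : ℕ} {z : ℤ}
    (hz0 : z ≠ 0) (hz : (z : 𝓞 K) ∈ I ^ k) :
    ((Ideal.absNorm I : ℝ) ^ (1 / Module.finrank ℤ (𝓞 K) : ℝ)) ^ k ≤ |(z : ℝ)| := by
  set d := Module.finrank ℤ (𝓞 K)
  have hd : d ≠ 0 := Module.finrank_pos.ne'
  have absNorm_span_le : (Ideal.absNorm (Ideal.span {(z : 𝓞 K)}) : ℝ) ≤ |(z : ℝ)| ^ d := by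
    simpa [house] using absNorm_span_intCast_add_le z (0 : 𝓞 K)
  have absNorm_pow_le : Ideal.absNorm I ^ k ≤ Ideal.absNorm (Ideal.span {(z : 𝓞 K)}) := by
    have span_ne_bot : Ideal.span {(z : 𝓞 K)} ≠ ⊥ := by simpa using hz0
    rw [← map_pow]
    exact absNorm_le_absNorm_of_dvd span_ne_bot (Ideal.dvd_span_singleton.2 hz)
  calc ((Ideal.absNorm I : ℝ) ^ (1 / d : ℝ)) ^ k = ((Ideal.absNorm I : ℝ) ^ k) ^ (1 / d : ℝ) :=
        Real.rpow_pow_comm (by positivity) _ _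
    _ ≤ (|(z : ℝ)| ^ d) ^ (1 / d : ℝ) := by
        gcongr
        exact le_trans (mod_cast absNorm_pow_le) absNorm_span_le
    _ = |(z : ℝ)| := by rw [one_div, Real.pow_rpow_inv_natCast (abs_nonneg _) hd]

end ResidueFields

section DyadicIntegers

/-- The integers in the open interval `(Y, 2Y)`. -/
noncomputable def dyadicInts (Y : ℝ) : Finset ℤ := Finset.Ioo ⌊Y⌋ ⌈2 * Y⌉

theorem mem_dyadicInts {Y : ℝ} {n : ℤ} : n ∈ dyadicInts Y ↔ Y < n ∧ n < 2 * Y := by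
  rw [dyadicInts, Finset.mem_Ioo, Int.floor_lt, Int.lt_ceil]

theorem abs_floor_sub_floor_sub_div_le {Y : ℝ} {m : ℤ} (hm : 0 < m) (a : ℤ) :
    |((⌊((⌈2 * Y⌉ - 1 : ℤ) - a) / (m : ℚ)⌋ - ⌊(⌊Y⌋ - a) / (m : ℚ)⌋ : ℤ) : ℝ) - Y / m| ≤ 2 := by
  have hm1 : (1 : ℝ) ≤ m := mod_cast hm
  have floor_bounds (n : ℤ) : (n - a) / (m : ℝ) - 1 < ⌊(n - a) / (m : ℚ)⌋ ∧
      (⌊(n - a) / (m : ℚ)⌋ : ℝ) ≤ (n - a) / m :=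
    ⟨mod_cast (Rat.cast_lt (K := ℝ)).2 (Int.sub_one_lt_floor ((n - a) / (m : ℚ))),
      mod_cast (Rat.cast_le (K := ℝ)).2 (Int.floor_le ((n - a) / (m : ℚ)))⟩
  obtain ⟨lt_upper, upper_le⟩ := floor_bounds (⌈2 * Y⌉ - 1)
  obtain ⟨lt_lower, lower_le⟩ := floor_bounds ⌊Y⌋
  set length : ℝ := ((⌈2 * Y⌉ - 1 : ℤ) - a) / m - (⌊Y⌋ - a) / m with h_length
  have length_sub_le : |length - Y / m| ≤ 1 := by
    have : length - Y / m = ((⌈2 * Y⌉ - 1 : ℤ) - ⌊Y⌋ - Y) / m := by rw [h_length]; ring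
    rw [this, abs_div, abs_of_pos (zero_lt_one.trans_le hm1), div_le_one (by linarith), abs_le]
    push_cast
    constructor <;> linarith [Int.le_ceil (2 * Y), Int.ceil_lt_add_one (2 * Y), Int.floor_le Y,
      Int.lt_floor_add_one Y]
  rw [abs_le] at length_sub_le ⊢
  push_cast at *
  constructor <;> linarith

theorem abs_card_dyadicInts_filter_modEq_sub_le {Y : ℝ} (hY : 0 ≤ Y) {m : ℤ} (hm : 0 < m)
    (a : ℤ) : |(((dyadicInts Y).filter (· ≡ a [ZMOD m])).card : ℝ) - Y / m| ≤ 2 := by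
  have dyadicInts_eq : dyadicInts Y = Finset.Ioc ⌊Y⌋ (⌈2 * Y⌉ - 1) := by
    ext n; simp only [dyadicInts, Finset.mem_Ioo, Finset.mem_Ioc]; omega
  have card_eq := Int.Ioc_filter_modEq_card ⌊Y⌋ (⌈2 * Y⌉ - 1) hm a
  have floor_le := abs_floor_sub_floor_sub_div_le (Y := Y) hm a
  set t := ⌊((⌈2 * Y⌉ - 1 : ℤ) - a) / (m : ℚ)⌋ - ⌊(⌊Y⌋ - a) / (m : ℚ)⌋
  have card_eq_max : (((dyadicInts Y).filter (· ≡ a [ZMOD m])).card : ℝ) = max (t : ℝ) 0 := by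
    rw [dyadicInts_eq]
    exact_mod_cast congrArg (Int.cast : ℤ → ℝ) card_eq
  have div_nonneg : 0 ≤ Y / m := div_nonneg hY (mod_cast hm.le)
  rw [card_eq_max]
  rcases max_cases (t : ℝ) 0 with ⟨h, -⟩ | ⟨h, h'⟩ <;> rw [h, abs_le] <;>
    rw [abs_le] at floor_le <;> constructor <;> linarith

open Classical in
theorem card_dyadicInts_filter_sub_mem_le {R : Type*} [CommRing R] (I : Ideal R) (r : R) {c Y : ℝ}
    (hc : 0 < c) (hY : 0 ≤ Y) (hI : ∀ z : ℤ, z ≠ 0 → (z : R) ∈ I → c ≤ |(z : ℝ)|) :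
    (((dyadicInts Y).filter fun n : ℤ => (n : R) - r ∈ I).card : ℝ) ≤ Y / c + 2 := by
  have div_nonneg : 0 ≤ Y / c := by positivity
  obtain hempty | ⟨a, ha⟩ :=
    ((dyadicInts Y).filter fun n : ℤ => (n : R) - r ∈ I).eq_empty_or_nonempty
  · rw [hempty, Finset.card_empty, Nat.cast_zero]
    positivity
  obtain ⟨m, hm⟩ := (IsPrincipalIdealRing.principal (I.comap (Int.castRingHom R))).principal
  have mem_iff (z : ℤ) : (z : R) ∈ I ↔ m ∣ z := by
    rw [← Ideal.mem_span_singleton, ← Ideal.submodule_span_eq, ← hm, Ideal.mem_comap,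
      eq_intCast]
  have filter_subset : ((dyadicInts Y).filter fun n : ℤ => (n : R) - r ∈ I) ⊆
      (dyadicInts Y).filter (· ≡ a [ZMOD |m|]) := by
    refine Finset.monotone_filter_right _ fun n _ hn => ?_
    rw [Int.modEq_comm, Int.modEq_iff_dvd, abs_dvd, ← mem_iff, Int.cast_sub,
      ← sub_sub_sub_cancel_right _ _ r]
    exact I.sub_mem hn (Finset.mem_filter.1 ha).2
  have card_le := Nat.cast_le (α := ℝ) |>.2 (Finset.card_le_card filter_subset)
  rcases eq_or_ne m 0 with rfl | hm0
  · have filter_subset_singleton : (dyadicInts Y).filter (· ≡ a [ZMOD |0|]) ⊆ {a} := fun n hn => by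
      simpa [Int.modEq_zero_iff] using (Finset.mem_filter.1 hn).2
    have : (((dyadicInts Y).filter (· ≡ a [ZMOD |0|])).card : ℝ) ≤ 1 :=
      mod_cast Finset.card_le_card filter_subset_singleton
    linarith
  · have le_m : c ≤ (|m| : ℤ) := by
      rw [Int.cast_abs]
      exact hI m hm0 ((mem_iff m).2 dvd_rfl)
    have modEq_le := (abs_le.1 (abs_card_dyadicInts_filter_modEq_sub_le hY (abs_pos.2 hm0) a)).2
    have : Y / (|m| : ℤ) ≤ Y / c := by gcongr
    linarith

end DyadicIntegers

section Valuations

open UniqueFactorizationMonoid (normalizedFactors)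

variable {K : Type*} [Field K] [NumberField K]

theorem span_intCast_sub_ne_bot {r : 𝓞 K} {n : ℤ} (h : house (algebraMap (𝓞 K) K r) < |(n : ℝ)|) :
    Ideal.span {(n : 𝓞 K) - r} ≠ ⊥ := by
  have house_neg : house (algebraMap (𝓞 K) K (-r)) = house (algebraMap (𝓞 K) K r) := by
    simp [house]
  have le_absNorm := le_absNorm_span_intCast_add (a := n) (α := -r) (house_neg.trans_le h.le)
  rw [← sub_eq_add_neg, house_neg] at le_absNorm
  have absNorm_pos : (0 : ℝ) < Ideal.absNorm (Ideal.span {(n : 𝓞 K) - r}) :=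
    (pow_pos (sub_pos.2 h) _).trans_le le_absNorm
  intro hbot
  simp [hbot] at absNorm_pos

theorem absNorm_span_intCast_sub_le (n : ℤ) (r : 𝓞 K) :
    (Ideal.absNorm (Ideal.span {(n : 𝓞 K) - r}) : ℝ) ≤
      (|(n : ℝ)| + house (algebraMap (𝓞 K) K r)) ^ Module.finrank ℤ (𝓞 K) := by
  simpa [house, sub_eq_add_neg] using absNorm_span_intCast_add_le n (-r)

open Classical in
/-- The total exponent of `P` in the ideals `(n - r)` with `Y < n < 2Y`. -/
noncomputable def valuationSum (r : 𝓞 K) (P : Ideal (𝓞 K)) (Y : ℝ) : ℝ :=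
  ∑ n ∈ dyadicInts Y, ((normalizedFactors (Ideal.span {(n : 𝓞 K) - r})).count P : ℝ)

theorem valuationSum_nonneg (r : 𝓞 K) (P : Ideal (𝓞 K)) (Y : ℝ) : 0 ≤ valuationSum r P Y :=
  Finset.sum_nonneg fun _ _ => Nat.cast_nonneg _

variable {r : 𝓞 K} {P : Ideal (𝓞 K)} {Y : ℝ}

theorem span_intCast_sub_ne_bot_of_mem_dyadicInts (hY : house (algebraMap (𝓞 K) K r) + 1 ≤ Y)
    {n : ℤ} (hn : n ∈ dyadicInts Y) : Ideal.span {(n : 𝓞 K) - r} ≠ ⊥ :=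
  span_intCast_sub_ne_bot (by linarith [(mem_dyadicInts.1 hn).1, le_abs_self (n : ℝ)])

theorem mul_log_absNorm_le_of_pow_dvd_span_intCast_sub (hP : Prime P)
    (hY : house (algebraMap (𝓞 K) K r) + 1 ≤ Y) {n : ℤ} (hn : n ∈ dyadicInts Y) {k : ℕ}
    (hk : P ^ k ∣ Ideal.span {(n : 𝓞 K) - r}) :
    k * Real.log (Ideal.absNorm P) ≤ Module.finrank ℤ (𝓞 K) * Real.log (3 * Y) := by
  have span_ne_bot := span_intCast_sub_ne_bot_of_mem_dyadicInts hY hn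
  have house_nonneg : 0 ≤ house (algebraMap (𝓞 K) K r) := house_nonneg _
  have ⟨Y_lt, lt_Y⟩ := mem_dyadicInts.1 hn
  have absNorm_pow_le : Ideal.absNorm P ^ k ≤ Ideal.absNorm (Ideal.span {(n : 𝓞 K) - r}) := by
    rw [← map_pow]
    exact absNorm_le_absNorm_of_dvd span_ne_bot hk
  have absNorm_pos : 0 < Ideal.absNorm P := zero_lt_two.trans_le (two_le_absNorm_of_prime hP)
  rw [← Real.log_pow, ← Real.log_pow]
  refine Real.log_le_log (by positivity) ?_
  calc (Ideal.absNorm P : ℝ) ^ k ≤ Ideal.absNorm (Ideal.span {(n : 𝓞 K) - r}) :=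
        mod_cast absNorm_pow_le
    _ ≤ (|(n : ℝ)| + house (algebraMap (𝓞 K) K r)) ^ Module.finrank ℤ (𝓞 K) :=
        absNorm_span_intCast_sub_le n r
    _ ≤ (3 * Y) ^ Module.finrank ℤ (𝓞 K) := by
        gcongr
        rw [abs_of_pos (by linarith)]
        linarith

open Classical in
theorem valuationSum_eq_sum_card_filter (hP : Prime P)
    (hY : house (algebraMap (𝓞 K) K r) + 1 ≤ Y) {L : ℕ}
    (hL : ∀ n ∈ dyadicInts Y, ∀ k, P ^ k ∣ Ideal.span {(n : 𝓞 K) - r} → k ≤ L) :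
    valuationSum r P Y = ∑ k ∈ Finset.Icc 1 L,
      (((dyadicInts Y).filter fun n : ℤ => (n : 𝓞 K) - r ∈ P ^ k).card : ℝ) := by
  simp only [valuationSum, Finset.card_filter, Nat.cast_sum]
  rw [Finset.sum_comm]
  refine Finset.sum_congr rfl fun n hn => ?_
  rw [count_normalizedFactors_eq_card_filter_pow_dvd hP
    (span_intCast_sub_ne_bot_of_mem_dyadicInts hY hn) (hL n hn), Finset.card_filter, Nat.cast_sum]
  simp only [Ideal.dvd_span_singleton]

theorem sum_Icc_inv_pow_le {c : ℝ} (hc : 1 < c) (L : ℕ) :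
    ∑ k ∈ Finset.Icc 1 L, (c ^ k)⁻¹ ≤ (c - 1)⁻¹ := by
  have hc' : 0 < c - 1 := by linarith
  calc ∑ k ∈ Finset.Icc 1 L, (c ^ k)⁻¹ = ∑ k ∈ Finset.Ico 1 (L + 1), c⁻¹ ^ k := by
        simp only [inv_pow]; rfl
    _ ≤ c⁻¹ ^ 1 / (1 - c⁻¹) :=
        geom_sum_Ico_le_of_lt_one (by positivity) (inv_lt_one_of_one_lt₀ hc)
    _ = (c - 1)⁻¹ := by field_simp

theorem log_mul_valuationSum_le (hP : Prime P) (hY : house (algebraMap (𝓞 K) K r) + 1 ≤ Y) {c : ℝ}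
    (hc : 1 < c) (hgap : ∀ (k : ℕ) (z : ℤ), z ≠ 0 → (z : 𝓞 K) ∈ P ^ k → c ^ k ≤ |(z : ℝ)|) :
    Real.log (Ideal.absNorm P) * valuationSum r P Y ≤
      Y * Real.log (Ideal.absNorm P) / (c - 1) +
        2 * Module.finrank ℤ (𝓞 K) * Real.log (3 * Y) := by
  classical
  have hY0 : 1 ≤ Y := by linarith [house_nonneg (algebraMap (𝓞 K) K r)]
  have log_pos : 0 < Real.log (Ideal.absNorm P) :=
    Real.log_pos (mod_cast one_lt_two.trans_le (two_le_absNorm_of_prime hP))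
  have log_Y_nonneg : 0 ≤ Real.log (3 * Y) := Real.log_nonneg (by linarith)
  set L := ⌊Module.finrank ℤ (𝓞 K) * Real.log (3 * Y) / Real.log (Ideal.absNorm P)⌋₊
  have L_mul_log_le : L * Real.log (Ideal.absNorm P) ≤ Module.finrank ℤ (𝓞 K) * Real.log (3 * Y) :=
    (le_div_iff₀ log_pos).1 (Nat.floor_le (by positivity))
  have valuationSum_le : valuationSum r P Y ≤ Y * (c - 1)⁻¹ + 2 * L :=
    calc valuationSum r P Y = ∑ k ∈ Finset.Icc 1 L,
          (((dyadicInts Y).filter fun n : ℤ => (n : 𝓞 K) - r ∈ P ^ k).card : ℝ) :=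
          valuationSum_eq_sum_card_filter hP hY fun n hn k hk => Nat.le_floor <|
            (le_div_iff₀ log_pos).2 (mul_log_absNorm_le_of_pow_dvd_span_intCast_sub hP hY hn hk)
      _ ≤ ∑ k ∈ Finset.Icc 1 L, (Y / c ^ k + 2) := Finset.sum_le_sum fun k _ =>
          card_dyadicInts_filter_sub_mem_le (P ^ k) r (by positivity) (by linarith) (hgap k)
      _ = Y * ∑ k ∈ Finset.Icc 1 L, (c ^ k)⁻¹ + 2 * L := by
          simp [Finset.sum_add_distrib, Finset.mul_sum, div_eq_mul_inv, mul_comm]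
      _ ≤ Y * (c - 1)⁻¹ + 2 * L := by gcongr; exact sum_Icc_inv_pow_le hc L
  calc Real.log (Ideal.absNorm P) * valuationSum r P Y
      ≤ Real.log (Ideal.absNorm P) * (Y * (c - 1)⁻¹ + 2 * L) := by gcongr
    _ = Y * Real.log (Ideal.absNorm P) / (c - 1) + 2 * (L * Real.log (Ideal.absNorm P)) := by ring
    _ ≤ _ := by linarith

theorem valuationSum_eq_zero_of_not_prime_absNorm (hP : Prime P)
    (hPr : P ∉ exceptionalPrimes r) (hN : ¬ (Ideal.absNorm P).Prime) : valuationSum r P Y = 0 := by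
  classical
  refine Finset.sum_eq_zero fun n _ => ?_
  rw [Nat.cast_eq_zero, Multiset.count_eq_zero]
  intro h
  exact hN (absNorm_prime_of_intCast_sub_mem hP hPr
    (Ideal.dvd_span_singleton.1 (UniqueFactorizationMonoid.dvd_of_mem_normalizedFactors h)))

theorem inv_sub_one_le_inv_add_two_mul_inv_sq {x : ℝ} (hx : 2 ≤ x) :
    (x - 1)⁻¹ ≤ x⁻¹ + 2 * (x ^ 2)⁻¹ := by
  have hx0 : 0 < x - 1 := by linarith
  have inv_add_eq : x⁻¹ + 2 * (x ^ 2)⁻¹ = (x + 2) / x ^ 2 := by field_simp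
  rw [inv_add_eq, inv_eq_one_div, div_le_div_iff₀ hx0 (by positivity)]
  linarith

theorem log_mul_valuationSum_le_of_notMem_exceptionalPrimes (hP : Prime P)
    (hPr : P ∉ exceptionalPrimes r) (hY : house (algebraMap (𝓞 K) K r) + 1 ≤ Y) :
    Real.log (Ideal.absNorm P) * valuationSum r P Y ≤
      Y * (Real.log (Ideal.absNorm P) / Ideal.absNorm P) +
        2 * Y * (Real.log (Ideal.absNorm P) / (Ideal.absNorm P : ℝ) ^ 2) +
        2 * Module.finrank ℤ (𝓞 K) * Real.log (3 * Y) := by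
  have hY0 : 1 ≤ Y := by linarith [house_nonneg (algebraMap (𝓞 K) K r)]
  have log_Y_nonneg : 0 ≤ Real.log (3 * Y) := Real.log_nonneg (by linarith)
  have := Real.log_natCast_nonneg (Ideal.absNorm P)
  by_cases hN : (Ideal.absNorm P).Prime
  · have two_le : (2 : ℝ) ≤ Ideal.absNorm P := mod_cast hN.two_le
    refine (log_mul_valuationSum_le hP hY (by linarith) fun k z hz0 hz =>
      absNorm_pow_le_abs_of_intCast_mem_pow hN hPr hz0 hz).trans ?_
    gcongr
    calc Y * Real.log (Ideal.absNorm P) / ((Ideal.absNorm P : ℝ) - 1)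
        ≤ Y * Real.log (Ideal.absNorm P) *
          ((Ideal.absNorm P : ℝ)⁻¹ + 2 * ((Ideal.absNorm P : ℝ) ^ 2)⁻¹) := by
          rw [div_eq_mul_inv]; gcongr; exact inv_sub_one_le_inv_add_two_mul_inv_sq two_le
      _ = _ := by ring
  · rw [valuationSum_eq_zero_of_not_prime_absNorm hP hPr hN, mul_zero]
    positivity

theorem exists_log_mul_valuationSum_le (r : 𝓞 K) (hP : Prime P) :
    ∃ C ≥ 0, ∀ Y, house (algebraMap (𝓞 K) K r) + 1 ≤ Y →
      Real.log (Ideal.absNorm P) * valuationSum r P Y ≤ C * Y := by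
  set d := Module.finrank ℤ (𝓞 K)
  have hd : 0 < d := Module.finrank_pos
  set c : ℝ := (Ideal.absNorm P : ℝ) ^ (1 / d : ℝ)
  have hc : 1 < c := Real.one_lt_rpow
    (mod_cast one_lt_two.trans_le (two_le_absNorm_of_prime hP)) (by positivity)
  have := Real.log_natCast_nonneg (Ideal.absNorm P)
  refine ⟨Real.log (Ideal.absNorm P) / (c - 1) + 6 * d, ?_, fun Y hY => ?_⟩
  · have := sub_pos.2 hc
    positivity
  · have hY0 : 1 ≤ Y := by linarith [house_nonneg (algebraMap (𝓞 K) K r)]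
    have log_le : Real.log (3 * Y) ≤ 3 * Y := Real.log_le_self (by linarith)
    calc Real.log (Ideal.absNorm P) * valuationSum r P Y
        ≤ Y * Real.log (Ideal.absNorm P) / (c - 1) + 2 * d * Real.log (3 * Y) :=
          log_mul_valuationSum_le hP hY hc fun k z hz0 hz =>
            rpow_one_div_finrank_pow_le_abs_of_intCast_mem_pow hz0 hz
      _ ≤ Y * Real.log (Ideal.absNorm P) / (c - 1) + 2 * d * (3 * Y) := by gcongr
      _ = _ := by ring

theorem div_absNorm_sub_two_le_valuationSum (hN : (Ideal.absNorm P).Prime)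
    (hY : house (algebraMap (𝓞 K) K r) + 1 ≤ Y) :
    Y / Ideal.absNorm P - 2 ≤ valuationSum r P Y := by
  classical
  have hP := prime_of_absNorm_prime hN
  have hY0 : 0 ≤ Y := by linarith [house_nonneg (algebraMap (𝓞 K) K r)]
  obtain ⟨a, ha⟩ := exists_intCast_sub_mem_of_absNorm_prime hN r
  have card_ge := (abs_le.1 (abs_card_dyadicInts_filter_modEq_sub_le hY0
    (Int.natCast_pos.2 hN.pos) a)).1
  rw [Int.cast_natCast, Finset.card_filter, Nat.cast_sum] at card_ge
  suffices ∀ n ∈ dyadicInts Y, ((if n ≡ a [ZMOD Ideal.absNorm P] then 1 else 0 : ℕ) : ℝ) ≤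
      ((normalizedFactors (Ideal.span {(n : 𝓞 K) - r})).count P : ℝ) by
    have := Finset.sum_le_sum this
    rw [valuationSum]
    linarith
  intro n hn
  split_ifs with hna
  · have sub_mem : (n : 𝓞 K) - r ∈ P := by
      obtain ⟨w, hw⟩ := (Int.modEq_iff_dvd.1 hna.symm)
      have cast_eq : (n : 𝓞 K) - r = (a - r) + (Ideal.absNorm P : 𝓞 K) * w := by
        rw [← sub_add_sub_cancel (n : 𝓞 K) a r, ← Int.cast_sub, hw]
        push_cast
        ring
      exact cast_eq ▸ P.add_mem ha (P.mul_mem_right _ (Ideal.absNorm_mem P))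
    rw [Nat.cast_le, ← prime_pow_dvd_iff_le_count_normalizedFactors hP
      (span_intCast_sub_ne_bot_of_mem_dyadicInts hY hn), pow_one]
    exact Ideal.dvd_span_singleton.2 sub_mem
  · rw [Nat.cast_zero]
    positivity

end Valuations

section Totals

variable {K : Type*} [Field K] [NumberField K]

variable (K) in
theorem exists_sum_primesLE_log_div_sq_le :
    ∃ C ≥ 0, ∀ x : ℕ, ∑ P ∈ primesLE K x,
      Real.log (Ideal.absNorm P) / (Ideal.absNorm P : ℝ) ^ 2 ≤ C := by
  obtain ⟨C, hC, h⟩ := exists_sum_primesLE_log_div_not_prime_le K one_le_two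
  refine ⟨C, hC, fun x => ?_⟩
  have h := h x
  rwa [Finset.filter_true_of_mem fun P _ => Nat.Prime.not_prime_pow le_rfl] at h

open Classical in
theorem exists_sum_exceptionalPrimes_log_mul_valuationSum_le {r : 𝓞 K}
    (hgen : Algebra.adjoin ℚ {algebraMap (𝓞 K) K r} = ⊤) :
    ∃ C ≥ 0, ∀ (x : ℕ) (Y : ℝ), house (algebraMap (𝓞 K) K r) + 1 ≤ Y →
      ∑ P ∈ primesLE K x with P ∈ exceptionalPrimes r,
        Real.log (Ideal.absNorm P) * valuationSum r P Y ≤ C * Y := by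
  choose! c c_nonneg hc using fun (P : Ideal (𝓞 K)) (hP : Prime P) =>
    exists_log_mul_valuationSum_le r hP
  set E := (finite_exceptionalPrimes hgen).toFinset
  have prime_of_mem_E {P : Ideal (𝓞 K)} (hP : P ∈ E) : Prime P :=
    ((finite_exceptionalPrimes hgen).mem_toFinset.1 hP).1
  have filter_subset (x : ℕ) : ((primesLE K x).filter (· ∈ exceptionalPrimes r)) ⊆ E :=
    fun P hP => (finite_exceptionalPrimes hgen).mem_toFinset.2 (Finset.mem_filter.1 hP).2
  refine ⟨∑ P ∈ E, c P, Finset.sum_nonneg fun P hP => c_nonneg P (prime_of_mem_E hP),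
    fun x Y hY => ?_⟩
  calc ∑ P ∈ primesLE K x with P ∈ exceptionalPrimes r,
        Real.log (Ideal.absNorm P) * valuationSum r P Y
      ≤ ∑ P ∈ E, Real.log (Ideal.absNorm P) * valuationSum r P Y :=
        Finset.sum_le_sum_of_subset_of_nonneg (filter_subset x) fun P _ _ =>
          mul_nonneg (Real.log_natCast_nonneg _) (valuationSum_nonneg r P Y)
    _ ≤ ∑ P ∈ E, c P * Y := Finset.sum_le_sum fun P hP => hc P (prime_of_mem_E hP) Y hY
    _ = (∑ P ∈ E, c P) * Y := (Finset.sum_mul ..).symm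

theorem exists_sum_log_mul_valuationSum_le {r : 𝓞 K}
    (hgen : Algebra.adjoin ℚ {algebraMap (𝓞 K) K r} = ⊤) :
    ∃ C ≥ 0, ∀ (x : ℕ) (Y : ℝ), house (algebraMap (𝓞 K) K r) + 1 ≤ Y →
      ∑ P ∈ primesLE K x, Real.log (Ideal.absNorm P) * valuationSum r P Y ≤
        Y * mertensSum K x + C * (Y + (primesLE K x).card * Real.log (3 * Y)) := by
  classical
  obtain ⟨C₁, hC₁, sum_sq_le⟩ := exists_sum_primesLE_log_div_sq_le K
  obtain ⟨C₂, hC₂, sum_exceptional_le⟩ := exists_sum_exceptionalPrimes_log_mul_valuationSum_le hgen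
  set d := Module.finrank ℤ (𝓞 K)
  refine ⟨2 * C₁ + C₂ + 2 * d, by positivity, fun x Y hY => ?_⟩
  have hY0 : 1 ≤ Y := by linarith [house_nonneg (algebraMap (𝓞 K) K r)]
  have log_Y_nonneg : 0 ≤ Real.log (3 * Y) := Real.log_nonneg (by linarith)
  set bound : Ideal (𝓞 K) → ℝ := fun P => Y * (Real.log (Ideal.absNorm P) / Ideal.absNorm P) +
    2 * Y * (Real.log (Ideal.absNorm P) / (Ideal.absNorm P : ℝ) ^ 2) + 2 * d * Real.log (3 * Y)
  have sum_generic_le : ∑ P ∈ primesLE K x with P ∉ exceptionalPrimes r,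
      Real.log (Ideal.absNorm P) * valuationSum r P Y ≤ ∑ P ∈ primesLE K x, bound P := by
    refine (Finset.sum_le_sum fun P hP => ?_).trans
      (Finset.sum_le_sum_of_subset_of_nonneg (Finset.filter_subset _ _) fun P _ _ => ?_)
    · rw [Finset.mem_filter, mem_primesLE] at hP
      exact log_mul_valuationSum_le_of_notMem_exceptionalPrimes hP.1.1 hP.2 hY
    · have := Real.log_natCast_nonneg (Ideal.absNorm P)
      positivity
  have sum_bound_eq : ∑ P ∈ primesLE K x, bound P = Y * mertensSum K x +
      2 * Y * ∑ P ∈ primesLE K x, Real.log (Ideal.absNorm P) / (Ideal.absNorm P : ℝ) ^ 2 +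
      2 * d * ((primesLE K x).card * Real.log (3 * Y)) := by
    simp only [bound, mertensSum, Finset.sum_add_distrib, Finset.mul_sum, Finset.sum_const,
      nsmul_eq_mul]
    ring
  have sq_term_le := mul_le_mul_of_nonneg_left (sum_sq_le x) (by positivity : 0 ≤ 2 * Y)
  have card_log_nonneg : 0 ≤ (2 * C₁ + C₂) * ((primesLE K x).card * Real.log (3 * Y)) := by
    positivity
  have d_mul_nonneg : 0 ≤ 2 * d * Y := by positivity
  rw [← Finset.sum_filter_add_sum_filter_not _ (· ∈ exceptionalPrimes r)]
  linarith [sum_exceptional_le x Y hY]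

theorem exists_le_sum_log_mul_valuationSum (r : 𝓞 K) :
    ∃ C ≥ 0, ∀ (x : ℕ) (Y : ℝ), house (algebraMap (𝓞 K) K r) + 1 ≤ Y →
      Y * mertensSum K x - C * (Y + x) ≤
        ∑ P ∈ primesLE K x, Real.log (Ideal.absNorm P) * valuationSum r P Y := by
  obtain ⟨C₁, hC₁, sum_log_le⟩ := exists_sum_primesLE_log_mul_rpow_le K one_pos le_rfl
  obtain ⟨C₂, hC₂, sum_not_prime_le⟩ := exists_sum_primesLE_log_div_not_prime_le K le_rfl
  simp only [sub_self, Real.rpow_zero, mul_one, Real.rpow_one] at sum_log_le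
  simp only [pow_one] at sum_not_prime_le
  refine ⟨2 * C₁ + C₂, by positivity, fun x Y hY => ?_⟩
  have hY0 : 0 ≤ Y := by linarith [house_nonneg (algebraMap (𝓞 K) K r)]
  have term_ge (P : Ideal (𝓞 K)) : Y * (Real.log (Ideal.absNorm P) / Ideal.absNorm P) -
      Y * (if ¬ (Ideal.absNorm P).Prime then Real.log (Ideal.absNorm P) / Ideal.absNorm P else 0) -
      2 * Real.log (Ideal.absNorm P) ≤ Real.log (Ideal.absNorm P) * valuationSum r P Y := by
    have log_nonneg := Real.log_natCast_nonneg (Ideal.absNorm P)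
    split_ifs with hN
    · refine le_of_eq_of_le ?_ (mul_le_mul_of_nonneg_left
        (div_absNorm_sub_two_le_valuationSum hN hY) log_nonneg)
      ring
    · linarith [mul_nonneg log_nonneg (valuationSum_nonneg r P Y)]
  have sum_ge := Finset.sum_le_sum fun P (_ : P ∈ primesLE K x) => term_ge P
  rw [Finset.sum_sub_distrib, Finset.sum_sub_distrib, ← Finset.mul_sum, ← Finset.mul_sum,
    ← Finset.mul_sum, ← Finset.sum_filter, ← mertensSum] at sum_ge
  have not_prime_term_le := mul_le_mul_of_nonneg_left (sum_not_prime_le x) hY0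
  have cross_terms_nonneg : 0 ≤ 2 * C₁ * Y + C₂ * x := by positivity
  linarith [sum_log_le x]

variable (K) in
theorem exists_card_primesLE_floor_mul_log_le :
    ∃ C ≥ 0, ∀ Y : ℝ, 2 ≤ Y → (primesLE K ⌊Y⌋₊).card * Real.log Y ≤ C * Y := by
  obtain ⟨C, hC, h⟩ := exists_card_primesLE_mul_log_le K
  refine ⟨2 * C, by positivity, fun Y hY => ?_⟩
  have floor_le : (⌊Y⌋₊ : ℝ) ≤ Y := Nat.floor_le (by linarith)
  have two_le_floor : (2 : ℝ) ≤ ⌊Y⌋₊ := mod_cast Nat.le_floor (mod_cast hY)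
  have log_le : Real.log Y ≤ 2 * Real.log ⌊Y⌋₊ :=
    calc Real.log Y ≤ Real.log ((⌊Y⌋₊ : ℝ) ^ 2) :=
          Real.log_le_log (by linarith) (by nlinarith [Nat.lt_floor_add_one Y])
      _ = 2 * Real.log ⌊Y⌋₊ := by rw [Real.log_pow, Nat.cast_two]
  calc (primesLE K ⌊Y⌋₊).card * Real.log Y
      ≤ (primesLE K ⌊Y⌋₊).card * (2 * Real.log ⌊Y⌋₊) := by gcongr
    _ = 2 * ((primesLE K ⌊Y⌋₊).card * Real.log ⌊Y⌋₊) := by ring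
    _ ≤ 2 * (C * ⌊Y⌋₊) := mul_le_mul_of_nonneg_left (h _) zero_le_two
    _ ≤ 2 * (C * Y) := by gcongr
    _ = 2 * C * Y := by ring

variable (K) in
theorem exists_abs_mertensSum_floor_three_mul_sub_log_le :
    ∃ C, ∀ Y : ℝ, 1 ≤ Y → |mertensSum K ⌊3 * Y⌋₊ - Real.log Y| ≤ C := by
  obtain ⟨C, h⟩ := exists_abs_mertensSum_sub_log_le K
  refine ⟨C + Real.log 3, fun Y hY => ?_⟩
  have floor_le : (⌊3 * Y⌋₊ : ℝ) ≤ 3 * Y := Nat.floor_le (by linarith)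
  have le_floor : Y ≤ ⌊3 * Y⌋₊ := by linarith [Nat.lt_floor_add_one (3 * Y)]
  have one_le_floor : (1 : ℝ) ≤ ⌊3 * Y⌋₊ := hY.trans le_floor
  have log_le : Real.log Y ≤ Real.log ⌊3 * Y⌋₊ := Real.log_le_log (by linarith) le_floor
  have le_log : Real.log ⌊3 * Y⌋₊ ≤ Real.log 3 + Real.log Y := by
    rw [← Real.log_mul three_ne_zero (by positivity)]
    exact Real.log_le_log (by linarith) floor_le
  have mertens := h ⌊3 * Y⌋₊ (mod_cast one_le_floor)
  rw [abs_le] at mertens ⊢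
  constructor <;> linarith

theorem exists_abs_sum_log_mul_valuationSum_sub_le {r : 𝓞 K}
    (hgen : Algebra.adjoin ℚ {algebraMap (𝓞 K) K r} = ⊤) :
    ∃ C, ∀ Y : ℝ, house (algebraMap (𝓞 K) K r) + 1 ≤ Y →
      |∑ P ∈ primesLE K ⌊3 * Y⌋₊, Real.log (Ideal.absNorm P) * valuationSum r P Y -
        Y * Real.log Y| ≤ C * Y := by
  obtain ⟨C₁, hC₁, upper⟩ := exists_sum_log_mul_valuationSum_le hgen
  obtain ⟨C₂, hC₂, lower⟩ := exists_le_sum_log_mul_valuationSum r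
  obtain ⟨C₃, hC₃, card_le⟩ := exists_card_primesLE_floor_mul_log_le K
  obtain ⟨C₄, mertens⟩ := exists_abs_mertensSum_floor_three_mul_sub_log_le K
  refine ⟨C₁ * (1 + 3 * C₃) + 4 * C₂ + C₄, fun Y hY => ?_⟩
  have hY0 : 1 ≤ Y := by linarith [house_nonneg (algebraMap (𝓞 K) K r)]
  have floor_le := mul_le_mul_of_nonneg_left (Nat.floor_le (by linarith : 0 ≤ 3 * Y)) hC₂
  have card_le := mul_le_mul_of_nonneg_left (card_le (3 * Y) (by linarith)) hC₁
  obtain ⟨mertens_ge, mertens_le⟩ := abs_le.1 (mertens Y hY0)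
  have mertens_ge := mul_le_mul_of_nonneg_left mertens_ge (by linarith : 0 ≤ Y)
  have mertens_le := mul_le_mul_of_nonneg_left mertens_le (by linarith : 0 ≤ Y)
  have upper_const_nonneg : 0 ≤ C₁ * (1 + 3 * C₃) * Y := by positivity
  have lower_const_nonneg : 0 ≤ 4 * C₂ * Y := by positivity
  rw [abs_le]
  constructor <;> linarith [upper ⌊3 * Y⌋₊ Y hY, lower ⌊3 * Y⌋₊ Y hY]

theorem finsum_ite_eq_sum {α M : Type*} [AddCommMonoid M] {p : α → Prop} [DecidablePred p]
    {f : α → M} {s : Finset α} (hs : ∀ i ∈ s, p i) (h : ∀ i, p i → f i ≠ 0 → i ∈ s) :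
    ∑ᶠ i, (if p i then f i else 0) = ∑ i ∈ s, f i := by
  rw [finsum_eq_sum_of_support_subset (s := s) _ fun i hi => ?_]
  · exact Finset.sum_congr rfl fun i hi => if_pos (hs i hi)
  · rw [Function.mem_support, ite_ne_right_iff] at hi
    exact h i hi.1 hi.2

open Classical in
theorem L1_eq_sum_primesLE (r : 𝓞 K) (n : ℤ) {Y : ℝ} (hY : 0 ≤ Y) :
    L1 r n Y = ∑ P ∈ primesLE K ⌊3 * Y⌋₊,
      ((UniqueFactorizationMonoid.normalizedFactors (Ideal.span {(n : 𝓞 K) - r})).count P : ℝ) *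
        Real.log (Ideal.absNorm P) := by
  refine finsum_ite_eq_sum (fun P hP => ?_) fun P hP hne => ?_
  · obtain ⟨P_prime, P_le⟩ := mem_primesLE.1 hP
    exact ⟨Ideal.isPrime_of_prime P_prime, (Nat.le_floor_iff (by positivity)).1 P_le⟩
  · have P_ne_bot : P ≠ ⊥ := by
      rintro rfl
      simp at hne
    exact mem_primesLE.2 ⟨Ideal.prime_of_isPrime P_ne_bot hP.1, Nat.le_floor hP.2⟩

open Classical in
theorem finsum_L1_eq_sum_log_mul_valuationSum (r : 𝓞 K) {Y : ℝ} (hY : 0 ≤ Y) :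
    (∑ᶠ n : ℤ, if Y < (n : ℝ) ∧ (n : ℝ) < 2 * Y then L1 r n Y else 0) =
      ∑ P ∈ primesLE K ⌊3 * Y⌋₊, Real.log (Ideal.absNorm P) * valuationSum r P Y := by
  rw [finsum_ite_eq_sum (s := dyadicInts Y) (fun n => mem_dyadicInts.1)
    fun n hn _ => mem_dyadicInts.2 hn]
  simp only [L1_eq_sum_primesLE r _ hY, valuationSum, Finset.mul_sum]
  rw [Finset.sum_comm]
  simp only [mul_comm]

end Totals

open Classical in
theorem stmt_7_general (K : Type*) [Field K] [NumberField K] (rO : 𝓞 K)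
    (hgen : Algebra.adjoin ℚ {algebraMap (𝓞 K) K rO} = ⊤) :
    ∃ Cc : ℝ, ∀ᶠ Y : ℝ in Filter.atTop,
      |(∑ᶠ n : ℤ, if Y < (n : ℝ) ∧ (n : ℝ) < 2 * Y then L1 rO n Y else 0) -
          Y * Real.log Y| ≤ Cc * Y := by
  obtain ⟨C, hC⟩ := exists_abs_sum_log_mul_valuationSum_sub_le hgen
  refine ⟨C, ?_⟩
  filter_upwards [Filter.eventually_ge_atTop (house (algebraMap (𝓞 K) K rO) + 1)] with Y hY
  have hY0 : 0 ≤ Y := by linarith [house_nonneg (algebraMap (𝓞 K) K rO)]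
  rw [finsum_L1_eq_sum_log_mul_valuationSum rO hY0]
  exact hC Y hY

open Classical in
/-- There is a constant `C` (depending only on `f`) such that for all
sufficiently large `X`, `|∑_{X < n < 2X} L₁(n, X) − X·log X| ≤ C·X`. -/
theorem stmt_7 (c₀ c₁ c₂ : ℤ)
    (hf : Irreducible (X ^ 3 + C c₂ * X ^ 2 + C c₁ * X + C c₀ : ℤ[X]))
    (K : Type*) [Field K] [NumberField K] (r : K)
    (hr : aeval r (X ^ 3 + C c₂ * X ^ 2 + C c₁ * X + C c₀ : ℤ[X]) = 0)
    (hgen : Algebra.adjoin ℚ {r} = ⊤)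
    (rO : 𝓞 K) (hrO : algebraMap (𝓞 K) K rO = r) :
    ∃ Cc : ℝ, ∀ᶠ Y : ℝ in Filter.atTop,
      |(∑ᶠ n : ℤ, if Y < (n : ℝ) ∧ (n : ℝ) < 2 * Y then L1 rO n Y else 0) -
          Y * Real.log Y| ≤ Cc * Y := by
  subst hrO
  exact stmt_7_general K rO hgen
end
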